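/- Let M be an a-relative generalized Cohen-Macaulay R-module with cd(a,M) > 0. Then for every prime ideal p ∈ Supp_R M with p properly contained in a, the localization M_p is a Cohen-Macaulay R_p-module. -/

import Mathlib

/-!
Formalization of a statement from "A theory of relative generalized Cohen-Macaulay modules"
by Divaani-Aazar, Ghanbari Doust, Tousi and Zakeri.

Throughout, `R` is a commutative Noetherian ring and `M` a finitely generated `R`-module.
Conventions used below:
* `locH I i M` is the local cohomology module `H^i_I(M)` (Mathlib's `localCohomology`).
* Conditions `cd(I,M) = c`, `ara(I,M) = n`, `f_I(M) = f`, `grade(I,M) = r` are expressed by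
  the predicates `IsCd`, `IsAra`, `IsFinDim`, `IsGrade`.
* Sequences are given as functions `Fin r → R`; `pSpan M x i = ⟨x_0,…,x_{i-1}⟩M`.
* Koszul (co)homology is defined via the explicit (co)chain complex on the `p`-element
  subsets of `{0,…,n-1}`, and the canonical map `λ^i` into local cohomology is the structure
  map (at exponent 1) into the direct limit of Koszul cohomologies of powers of the sequence,
  which is the realization of `H^i_{⟨x⟩}(M)` used in the paper (2.1(iv)).
-/

open CategoryTheory

noncomputable section

variable {R : Type} [CommRing R]

/-! ### Local cohomology, cohomological dimension, arithmetic rank -/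

/-- The `i`-th local cohomology module `H^i_I(M)`. -/
abbrev locH (I : Ideal R) (i : ℕ) (M : Type) [AddCommGroup M] [Module R M] : ModuleCat R :=
  (localCohomology I i).obj (ModuleCat.of R M)

/-- `cd(I, M) = c`: the cohomological dimension of `I` on `M` equals `c`, i.e.
`H^c_I(M) ≠ 0` and `H^i_I(M) = 0` for all `i > c`. -/
def IsCd (I : Ideal R) (M : Type) [AddCommGroup M] [Module R M] (c : ℕ) : Prop :=
  Nontrivial (locH I c M) ∧ ∀ i : ℕ, c < i → Subsingleton (locH I i M)

/-- `f_I(M) = f`: the `I`-finiteness dimension of `M` equals `f`, i.e. `f` is the least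
integer such that `H^f_I(M)` is not finitely generated. -/
def IsFinDim (I : Ideal R) (M : Type) [AddCommGroup M] [Module R M] (f : ℕ) : Prop :=
  (∀ i : ℕ, i < f → Module.Finite R (locH I i M)) ∧ ¬ Module.Finite R (locH I f M)

/-- `M` is `I`-relative generalized Cohen-Macaulay: `cd(I,M) ≤ 0` or `cd(I,M) = f_I(M)`. -/
def IsRelGCM (I : Ideal R) (M : Type) [AddCommGroup M] [Module R M] : Prop :=
  (∀ i : ℕ, 0 < i → Subsingleton (locH I i M)) ∨
    ∃ c : ℕ, IsCd I M c ∧ IsFinDim I M c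

/-- `ara(I, M) = n`: the arithmetic rank of `I` with respect to `M` equals `n`, i.e. `n` is the
least integer such that there are `x_1, …, x_n ∈ R` with
`Rad(⟨x_1,…,x_n⟩ + Ann M) = Rad(I + Ann M)`. -/
def IsAra (I : Ideal R) (M : Type) [AddCommGroup M] [Module R M] (n : ℕ) : Prop :=
  IsLeast {k : ℕ | ∃ x : Fin k → R,
    (Ideal.span (Set.range x) + Module.annihilator R M).radical
      = (I + Module.annihilator R M).radical} n

/-- `x_1, …, x_c` is an `I`-relative system of parameters of `M` (where `c = cd(I,M)`):
the `x_i` lie in `I` and `Rad(⟨x_1,…,x_c⟩ + Ann M) = Rad(I + Ann M)`. -/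
def IsRsop (I : Ideal R) (M : Type) [AddCommGroup M] [Module R M] {c : ℕ}
    (x : Fin c → R) : Prop :=
  (∀ j, x j ∈ I) ∧
    (Ideal.span (Set.range x) + Module.annihilator R M).radical
      = (I + Module.annihilator R M).radical

/-! ### The natural maps `φ^i_M : Ext^i(R/I, M) → H^i_I(M)` and relative surjective
Buchsbaum modules -/

/-- The `i`-th Ext module `Ext^i_R(R/I, M)`. -/
abbrev extH (I : Ideal R) (i : ℕ) (M : Type) [AddCommGroup M] [Module R M] : ModuleCat R :=
  ((Ext R (ModuleCat R) i).obj (Opposite.op (ModuleCat.of R (R ⧸ I)))).obj (ModuleCat.of R M)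

/-- The natural map `φ^i_M : Ext^i_R(R/I, M) → H^i_I(M)`, i.e. the structure map into the
colimit `H^i_I(M) = colim_n Ext^i_R(R/I^n, M)` at `n = 1`. -/
def phi (I : Ideal R) (i : ℕ) (M : Type) [AddCommGroup M] [Module R M] :
    ((localCohomology.diagram (localCohomology.idealPowersDiagram I) i).obj
        (Opposite.op (Opposite.op (1 : ℕ)))).obj (ModuleCat.of R M) ⟶
      (localCohomology I i).obj (ModuleCat.of R M) :=
  have := localCohomology.hasColimitDiagram.{0, 0} (localCohomology.idealPowersDiagram I) i
  (Limits.colimit.ι (localCohomology.diagram (localCohomology.idealPowersDiagram I) i)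
      (Opposite.op (Opposite.op (1 : ℕ)))).app (ModuleCat.of R M)

/-- `φ^i_M` is surjective. -/
def PhiSurj (I : Ideal R) (i : ℕ) (M : Type) [AddCommGroup M] [Module R M] : Prop :=
  Function.Surjective (phi I i M)

/-- `M` is `I`-relative surjective Buchsbaum: `φ^i_M` is surjective for all `i < cd(I,M)`. -/
def IsRelSurjBuchsbaum (I : Ideal R) (M : Type) [AddCommGroup M] [Module R M] : Prop :=
  ∀ i : ℕ, (∃ j : ℕ, i < j ∧ Nontrivial (locH I j M)) → PhiSurj I i M

/-- `grade(I, M) = r`: `r` is the least integer with `Ext^r_R(R/I, M) ≠ 0`. -/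
def IsGrade (I : Ideal R) (M : Type) [AddCommGroup M] [Module R M] (r : ℕ) : Prop :=
  Nontrivial (extH I r M) ∧ ∀ i : ℕ, i < r → Subsingleton (extH I i M)

/-! ### Height, depth, `λ_I(M)`, the finiteness dimension as an extended natural number,
and Cohen-Macaulay modules over local rings -/

/-- The height of an ideal `I`: the infimum of the heights of the primes containing `I`. -/
noncomputable def idealHeight {S : Type} [CommRing S] (I : Ideal S) : ℕ∞ :=
  sInf {h : ℕ∞ | ∃ q : PrimeSpectrum S, I ≤ q.asIdeal ∧ h = Order.height q}

/-- The depth of a module `N` over a local ring `A`, characterized à la Rees as the least `k`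
with `Ext^k_A(A/m, N) ≠ 0`. -/
noncomputable def depthE (A : Type) [CommRing A] [IsLocalRing A] (N : Type) [AddCommGroup N]
    [Module A N] : ℕ∞ :=
  sInf {d : ℕ∞ | ∃ k : ℕ, d = (k : ℕ∞) ∧
    Nontrivial (extH (IsLocalRing.maximalIdeal A) k N)}

/-- The (Krull) dimension of a module `N` over a ring `A`, as the Krull dimension of
`A / Ann_A N`. -/
noncomputable def dimE (A : Type) [CommRing A] (N : Type) [AddCommGroup N] [Module A N] :
    WithBot ℕ∞ :=
  ringKrullDim (A ⧸ Module.annihilator A N)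

/-- A module `N` over a local ring `A` is Cohen-Macaulay if `depth N = dim N`. -/
def IsCMMod (A : Type) [CommRing A] [IsLocalRing A] (N : Type) [AddCommGroup N]
    [Module A N] : Prop :=
  (depthE A N : WithBot ℕ∞) = dimE A N

/-- The `I`-finiteness dimension `f_I(M)`, as an extended natural number. -/
noncomputable def finDimNE (I : Ideal R) (M : Type) [AddCommGroup M] [Module R M] : ℕ∞ :=
  sInf {d : ℕ∞ | ∃ k : ℕ, d = (k : ℕ∞) ∧ ¬ Module.Finite R (locH I k M)}

/-- `λ_I(M) := inf { depth M_p + ht((I+p)/p) | p ∈ Spec R \ V(I) }`. -/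
noncomputable def lambdaNE (I : Ideal R) (M : Type) [AddCommGroup M] [Module R M] : ℕ∞ :=
  sInf {d : ℕ∞ | ∃ p : PrimeSpectrum R, ¬ I ≤ p.asIdeal ∧
    d = depthE (Localization.AtPrime p.asIdeal) (LocalizedModule p.asIdeal.primeCompl M)
        + idealHeight (Ideal.map (Ideal.Quotient.mk p.asIdeal) I)}

/-!
Fix a minimal prime `q` of `I` and let `F^i(X)` be the localization at `q` of `H^i_I(X)`. As
`q` is minimal over `I`, the functors `F^i` behave like local cohomology supported at the maximal
ideal of `R_q`: the largest `i` with `F^i(M) ≠ 0` is the largest codimension in `q` of a prime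
`P ≤ q` in `Supp M`, and for `P < q` no power of `I` kills `F^d(R/P)`, where `d` is the codimension
of `P`. Hence every codimension of `P ≤ q` in `Supp M` is at most `c = cd(I, M)`, while the finite
generation of `H^i_I(M)` for `i < c` makes a power of `I` kill `F^i(M)`, and this forces the
associated primes `P < q` of `M` to have codimension at least `c`.

For `p < q` in `Supp M`, either `p` has codimension at least `c`, or it is contained in no
associated prime `P < q` of `M`. In the second case some `x ∈ p` lies outside all these `P`, and a
power of `I` kills `F^i(M/xM)` for `i < c - 1`. Iterating gives an `M_p`-regular sequence of length
at least `c - codim p`, which in turn is at least `dim M_p`.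
-/

universe u v w t

section HomologyElements

variable {S : Type u} [Ring S] {ι : Type w} {c : ComplexShape ι}
  {K L : HomologicalComplex (ModuleCat.{v} S) c}

lemma iCycles_injective (i : ι) : Function.Injective (K.iCycles i) :=
  (ModuleCat.mono_iff_injective _).1 inferInstance

lemma homologyπ_surjective (i : ι) : Function.Surjective (K.homologyπ i) :=
  (ModuleCat.epi_iff_surjective _).1 inferInstance

lemma exists_iCycles_eq {i j : ι} (hij : c.next i = j) {x : K.X i} (hx : K.d i j x = 0) :
    ∃ z : K.cycles i, K.iCycles i z = x :=
  (ShortComplex.moduleCat_exact_iff _).1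
    (ShortComplex.exact_of_f_is_kernel (ShortComplex.mk _ _ (K.iCycles_d i j))
      (K.cyclesIsKernel i j hij)) x hx

lemma homologyπ_eq_zero_iff {i j : ι} (hij : c.prev j = i) (z : K.cycles j) :
    K.homologyπ j z = 0 ↔ ∃ x, K.d i j x = K.iCycles j z := by
  have exact := (ShortComplex.ShortExact.moduleCat_exact_iff_function_exact _).1
    (ShortComplex.exact_of_g_is_cokernel (ShortComplex.mk _ _ (K.toCycles_comp_homologyπ i j))
      (K.homologyIsCokernel i j hij))
  refine (exact z).trans (exists_congr fun x ↦ ?_)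
  rw [← K.toCycles_i i j, ModuleCat.comp_apply, (iCycles_injective j).eq_iff]

lemma homologyMap_homologyπ (φ : K ⟶ L) {i : ι} {z : K.cycles i} {z' : L.cycles i}
    (h : L.iCycles i z' = φ.f i (K.iCycles i z)) :
    HomologicalComplex.homologyMap φ i (K.homologyπ i z) = L.homologyπ i z' := by
  have hz : HomologicalComplex.cyclesMap φ i z = z' := iCycles_injective i <| by
    rw [h, ← ModuleCat.comp_apply, HomologicalComplex.cyclesMap_i, ModuleCat.comp_apply]
  rw [← hz, ← ModuleCat.comp_apply, ← ModuleCat.comp_apply, HomologicalComplex.homologyπ_naturality]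

end HomologyElements

lemma homologyUnop_hom_naturality {ι : Type w} {c : ComplexShape ι} {V : Type u} [Category.{v} V]
    [Limits.HasZeroMorphisms V] {K L : HomologicalComplex Vᵒᵖ c} (φ : K ⟶ L) (i : ι)
    [K.HasHomology i] [L.HasHomology i] :
    HomologicalComplex.homologyMap ((HomologicalComplex.unopFunctor V c).map φ.op) i ≫
        (K.homologyUnop i).hom =
      (L.homologyUnop i).hom ≫ (HomologicalComplex.homologyMap φ i).unop :=
  (congrArg Quiver.Hom.unop (HomologicalComplex.homologyOp_hom_naturality
    ((HomologicalComplex.unopFunctor V c).map φ.op) i)).symm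

/-! ### Ext groups as classes of cocycles -/

section ExtOfCocycle

variable {S : Type w} [Ring S] {C : Type u} [Category.{v} C] [Abelian C] [Linear S C]
  {X X' Y Y' : C} {P : ProjectiveResolution X} {P' : ProjectiveResolution X'} {n : ℕ}

variable (S) in
/-- The `n`-cocycles of the complex `Hom(P, Y)` attached to a projective resolution `P`. -/
abbrev ExtCocycles (P : ProjectiveResolution X) (Y : C) (n : ℕ) : ModuleCat S :=
  (P.complex.linearYonedaObj S Y).cycles n

/-- The morphism underlying a cocycle. -/
def cocycleHom : ExtCocycles S P Y n →ₗ[S] (P.complex.X n ⟶ Y) :=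
  ((P.complex.linearYonedaObj S Y).iCycles n).hom

lemma d_comp_cocycleHom (z : ExtCocycles S P Y n) : P.complex.d (n + 1) n ≫ cocycleHom z = 0 :=
  congrArg (fun f ↦ f.hom z) ((P.complex.linearYonedaObj S Y).iCycles_d n (n + 1))

lemma exists_cocycleHom_eq {f : P.complex.X n ⟶ Y} (hf : P.complex.d (n + 1) n ≫ f = 0) :
    ∃ z : ExtCocycles S P Y n, cocycleHom z = f :=
  exists_iCycles_eq (K := P.complex.linearYonedaObj S Y) (by simp) hf

/-- The map of cochain complexes `Hom(B, Y) ⟶ Hom(A, Y)` given by precomposition with `A ⟶ B`. -/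
abbrev precompCochain {A B : ChainComplex C ℕ} (φ : A ⟶ B) (Y : C) :
    B.linearYonedaObj S Y ⟶ A.linearYonedaObj S Y :=
  (HomologicalComplex.unopFunctor _ _).map
    ((((linearYoneda S C).obj Y).rightOp.mapHomologicalComplex _).map φ).op

/-- The map of cochain complexes `Hom(A, Y) ⟶ Hom(A, Y')` given by postcomposition with
`Y ⟶ Y'`. -/
abbrev postcompCochain (A : ChainComplex C ℕ) (g : Y ⟶ Y') :
    A.linearYonedaObj S Y ⟶ A.linearYonedaObj S Y' :=
  (HomologicalComplex.unopFunctor _ _).map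
    ((NatTrans.mapHomologicalComplex (NatTrans.rightOp ((linearYoneda S C).map g)) _).app A).op

section AbelianExt

variable [HasExt.{t} C]

lemma extMk_zero_eq_zero_iff {f : P.complex.X 0 ⟶ Y}
    (hf : P.complex.d 1 0 ≫ f = 0) : P.extMk f 1 rfl hf = 0 ↔ f = 0 := by
  refine ⟨fun h ↦ ?_, by rintro rfl; exact P.extMk_zero _ _⟩
  have hX : Limits.IsZero (P.cochainComplex.X 1) :=
    CochainComplex.isZero_of_isStrictlyLE _ 0 _ (by lia)
  rw [← P.extEquivCohomologyClass.apply_eq_iff_eq,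
    ProjectiveResolution.extEquivCohomologyClass_extMk,
    ProjectiveResolution.extEquivCohomologyClass_zero,
    CochainComplex.HomComplex.CohomologyClass.mk_eq_zero_iff,
    CochainComplex.HomComplex.Cocycle.toSingleMk_mem_coboundaries_iff _ _ _ _ _ 1 (by simp)] at h
  obtain ⟨g, hg⟩ := h
  rw [hX.eq_of_src g 0, Limits.comp_zero] at hg
  exact Limits.zero_of_epi_comp _ hg.symm

/-- The class in `Abelian.Ext` of a cocycle of `Hom(P, Y)`. -/
def abelianExtOfCocycle (P : ProjectiveResolution X) (Y : C) (n : ℕ) :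
    ExtCocycles S P Y n →ₗ[S] Abelian.Ext X Y n where
  toFun z := P.extMk (cocycleHom z) (n + 1) rfl (d_comp_cocycleHom z)
  map_add' z z' := by simp only [P.add_extMk, map_add]
  map_smul' r z := by
    simp only [RingHom.id_apply, Abelian.Ext.smul_eq_comp_mk₀, P.extMk_comp_mk₀, map_smul,
      Linear.comp_smul, Category.comp_id]

lemma abelianExtOfCocycle_surjective :
    Function.Surjective (abelianExtOfCocycle (S := S) P Y n) := by
  intro α
  obtain ⟨f, hf, rfl⟩ := P.extMk_surjective α (n + 1) rfl
  obtain ⟨z, rfl⟩ := exists_cocycleHom_eq (S := S) hf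
  exact ⟨z, rfl⟩

end AbelianExt

variable [EnoughProjectives C]

lemma isoExt_inv_comp_map_app (f : X' ⟶ X) (φ : P'.complex ⟶ P.complex)
    (comm : φ.f 0 ≫ P.π.f 0 = P'.π.f 0 ≫ f) :
    (P.isoExt n Y).inv ≫ ((Ext S C n).map f.op).app Y =
      HomologicalComplex.homologyMap (precompCochain φ Y) n ≫ (P'.isoExt n Y).inv := by
  let F := ((linearYoneda S C).obj Y).rightOp
  have derived := congrArg Quiver.Hom.unop
    (ProjectiveResolution.isoLeftDerivedObj_hom_naturality f P' P φ comm F n)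
  have unop := homologyUnop_hom_naturality ((F.mapHomologicalComplex _).map φ) n
  exact (Category.assoc _ _ _).trans <| (congrArg (_ ≫ ·) derived).trans <|
    (Category.assoc _ _ _).symm.trans <| (congrArg (· ≫ _) unop.symm).trans (Category.assoc _ _ _)

lemma isoExt_inv_comp_map (P : ProjectiveResolution X) (g : Y ⟶ Y') :
    (P.isoExt n Y).inv ≫ ((Ext S C n).obj (Opposite.op X)).map g =
      HomologicalComplex.homologyMap (postcompCochain P.complex g) n ≫ (P.isoExt n Y').inv := by
  let α := NatTrans.rightOp ((linearYoneda S C).map g)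
  have derived := congrArg Quiver.Hom.unop
    ((Iso.eq_comp_inv _).1 ((P.leftDerived_app_eq α n).trans (Category.assoc _ _ _).symm))
  have unop := homologyUnop_hom_naturality
    ((NatTrans.mapHomologicalComplex α (ComplexShape.down ℕ)).app P.complex) n
  exact (Category.assoc _ _ _).trans <| (congrArg (_ ≫ ·) derived).trans <|
    (Category.assoc _ _ _).symm.trans <| (congrArg (· ≫ _) unop.symm).trans (Category.assoc _ _ _)

/-- The class in the derived functor `Ext` of a cocycle of `Hom(P, Y)`. -/
def extOfCocycle (P : ProjectiveResolution X) (Y : C) (n : ℕ) :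
    ExtCocycles S P Y n →ₗ[S] ((Ext S C n).obj (Opposite.op X)).obj Y :=
  ((P.complex.linearYonedaObj S Y).homologyπ n ≫ (P.isoExt n Y).inv).hom

lemma extOfCocycle_surjective : Function.Surjective (extOfCocycle (S := S) P Y n) :=
  (P.isoExt n Y).toLinearEquiv.symm.surjective.comp (homologyπ_surjective n)

lemma extOfCocycle_eq_zero_iff (z : ExtCocycles S P Y n) :
    extOfCocycle P Y n z = 0 ↔ (P.complex.linearYonedaObj S Y).homologyπ n z = 0 :=
  (P.isoExt n Y).toLinearEquiv.symm.map_eq_zero_iff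

lemma extOfCocycle_zero_eq_zero_iff (z : ExtCocycles S P Y 0) :
    extOfCocycle P Y 0 z = 0 ↔ cocycleHom z = 0 := by
  rw [extOfCocycle_eq_zero_iff, homologyπ_eq_zero_iff rfl,
    HomologicalComplex.shape _ _ _ (by simp)]
  exact ⟨fun ⟨_, hx⟩ ↦ hx.symm, fun h ↦ ⟨0, h.symm⟩⟩

lemma extOfCocycle_succ_eq_zero_iff (z : ExtCocycles S P Y (n + 1)) :
    extOfCocycle P Y (n + 1) z = 0 ↔
      ∃ g : P.complex.X n ⟶ Y, P.complex.d (n + 1) n ≫ g = cocycleHom z :=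
  (extOfCocycle_eq_zero_iff z).trans (homologyπ_eq_zero_iff (by simp) z)

lemma map_extOfCocycle (g : Y ⟶ Y') {z : ExtCocycles S P Y n} {z' : ExtCocycles S P Y' n}
    (h : cocycleHom z' = cocycleHom z ≫ g) :
    ((Ext S C n).obj (Opposite.op X)).map g (extOfCocycle P Y n z) = extOfCocycle P Y' n z' :=
  (congrArg (fun f ↦ f.hom ((P.complex.linearYonedaObj S Y).homologyπ n z))
    (isoExt_inv_comp_map P g)).trans
    (congrArg (P.isoExt n Y').inv (homologyMap_homologyπ (postcompCochain P.complex g) h))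

lemma map_app_extOfCocycle {f : X' ⟶ X} {φ : P'.complex ⟶ P.complex}
    (comm : φ.f 0 ≫ P.π.f 0 = P'.π.f 0 ≫ f) {z : ExtCocycles S P Y n}
    {z' : ExtCocycles S P' Y n} (h : cocycleHom z' = φ.f n ≫ cocycleHom z) :
    ((Ext S C n).map f.op).app Y (extOfCocycle P Y n z) = extOfCocycle P' Y n z' :=
  (congrArg (fun f ↦ f.hom ((P.complex.linearYonedaObj S Y).homologyπ n z))
    (isoExt_inv_comp_map_app f φ comm)).trans
    (congrArg (P'.isoExt n Y).inv (homologyMap_homologyπ (precompCochain φ Y) h))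

variable [HasExt.{t} C]

lemma ker_extOfCocycle_eq :
    (extOfCocycle (S := S) P Y n).ker = (abelianExtOfCocycle P Y n).ker := by
  ext z
  cases n with
  | zero =>
    exact (extOfCocycle_zero_eq_zero_iff z).trans
      (extMk_zero_eq_zero_iff (d_comp_cocycleHom z)).symm
  | succ n =>
    exact (extOfCocycle_succ_eq_zero_iff z).trans
      (P.extMk_eq_zero_iff _ _ rfl (d_comp_cocycleHom z) n rfl).symm

variable (S X Y n) in
/-- The comparison between the derived functor `Ext` and `Abelian.Ext`. -/
def extLinearEquiv : ((Ext S C n).obj (Opposite.op X)).obj Y ≃ₗ[S] Abelian.Ext X Y n :=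
  ((extOfCocycle (projectiveResolution X) Y n).quotKerEquivOfSurjective
    extOfCocycle_surjective).symm ≪≫ₗ
  Submodule.quotEquivOfEq _ _ ker_extOfCocycle_eq ≪≫ₗ
  (abelianExtOfCocycle (projectiveResolution X) Y n).quotKerEquivOfSurjective
    abelianExtOfCocycle_surjective

lemma extLinearEquiv_extOfCocycle (z : ExtCocycles S (projectiveResolution X) Y n) :
    extLinearEquiv S X Y n (extOfCocycle _ Y n z) = abelianExtOfCocycle _ Y n z := by
  have h : (LinearMap.quotKerEquivOfSurjective _ extOfCocycle_surjective).symm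
      (extOfCocycle _ Y n z) = Submodule.Quotient.mk z := by
    rw [LinearEquiv.symm_apply_eq]; rfl
  exact congrArg (fun q ↦ LinearMap.quotKerEquivOfSurjective _ abelianExtOfCocycle_surjective
    (Submodule.quotEquivOfEq _ _ ker_extOfCocycle_eq q)) h

lemma extLinearEquiv_map (g : Y ⟶ Y') (e : ((Ext S C n).obj (Opposite.op X)).obj Y) :
    extLinearEquiv S X Y' n (((Ext S C n).obj (Opposite.op X)).map g e) =
      (extLinearEquiv S X Y n e).comp (Abelian.Ext.mk₀ g) (add_zero n) := by
  obtain ⟨z, rfl⟩ := extOfCocycle_surjective (P := projectiveResolution X) e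
  obtain ⟨z', hz'⟩ := exists_cocycleHom_eq (S := S) (f := cocycleHom z ≫ g)
    (by rw [← Category.assoc, d_comp_cocycleHom, Limits.zero_comp])
  rw [map_extOfCocycle g hz', extLinearEquiv_extOfCocycle, extLinearEquiv_extOfCocycle]
  simp [abelianExtOfCocycle, ProjectiveResolution.extMk_comp_mk₀, hz']

lemma extLinearEquiv_map_app (f : X' ⟶ X) (e : ((Ext S C n).obj (Opposite.op X)).obj Y) :
    extLinearEquiv S X' Y n (((Ext S C n).map f.op).app Y e) =
      (Abelian.Ext.mk₀ f).comp (extLinearEquiv S X Y n e) (zero_add n) := by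
  let P := projectiveResolution X
  let P' := projectiveResolution X'
  obtain ⟨z, rfl⟩ := extOfCocycle_surjective (P := P) e
  have comm := ProjectiveResolution.lift_commutes_zero f P' P
  let φ : P'.Hom P f := ⟨ProjectiveResolution.lift f P' P, by simpa using comm⟩
  obtain ⟨z', hz'⟩ := exists_cocycleHom_eq (S := S) (f := φ.hom.f n ≫ cocycleHom z)
    (by rw [← Category.assoc, ← φ.hom.comm, Category.assoc, d_comp_cocycleHom, Limits.comp_zero])
  rw [map_app_extOfCocycle comm hz', extLinearEquiv_extOfCocycle, extLinearEquiv_extOfCocycle]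
  simp only [abelianExtOfCocycle, LinearMap.coe_mk, AddHom.coe_mk, hz']
  exact (ProjectiveResolution.mk₀_comp_extMk _ _ _ _ φ).symm

end ExtOfCocycle

/-! ### Local cohomology as a colimit of Ext groups -/

section LocalCohomology

open Abelian

/-- The object `R ⧸ I ^ n` whose Ext groups have local cohomology as their colimit. -/
abbrev powQuotient (I : Ideal R) (n : ℕ) : ModuleCat R := ModuleCat.of R (R ⧸ I ^ n)

/-- The canonical projection `R ⧸ I ^ n ⟶ R ⧸ I ^ m` for `m ≤ n`. -/
abbrev powQuotientMap (I : Ideal R) {m n : ℕ} (h : m ≤ n) : powQuotient I n ⟶ powQuotient I m :=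
  ModuleCat.ofHom (Submodule.mapQ _ _ LinearMap.id (Ideal.pow_le_pow_right h))

variable (I : Ideal R) (i : ℕ) {X Y Z : Type} [AddCommGroup X] [Module R X] [AddCommGroup Y]
  [Module R Y] [AddCommGroup Z] [Module R Z]

lemma hasColimit_idealPowersDiagram :
    Limits.HasColimit (localCohomology.diagram (localCohomology.idealPowersDiagram I) i) :=
  localCohomology.hasColimitDiagram.{0, 0} (localCohomology.idealPowersDiagram I) i

/-- The structure map `Ext^i(R ⧸ I ^ n, Y) → H^i_I(Y)` of the colimit. -/
def extToLocH (n : ℕ) (Y : Type) [AddCommGroup Y] [Module R Y] :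
    Ext (powQuotient I n) (ModuleCat.of R Y) i →ₗ[R] locH I i Y :=
  have := hasColimit_idealPowersDiagram I i
  ((Limits.colimit.ι (localCohomology.diagram (localCohomology.idealPowersDiagram I) i)
    (Opposite.op (Opposite.op n))).app (ModuleCat.of R Y)).hom ∘ₗ
      (extLinearEquiv R (powQuotient I n) (ModuleCat.of R Y) i).symm.toLinearMap

/-- The map `H^i_I(f)` between local cohomology modules induced by a linear map `f`. -/
def locHMap (f : X →ₗ[R] Y) : locH I i X →ₗ[R] locH I i Y :=
  ((localCohomology I i).map (ModuleCat.ofHom f)).hom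

variable {I i}

lemma extToLocH_extLinearEquiv {n : ℕ}
    (e : ((_root_.Ext R (ModuleCat R) i).obj (Opposite.op (powQuotient I n))).obj
      (ModuleCat.of R Y)) :
    have := hasColimit_idealPowersDiagram I i
    extToLocH I i n Y (extLinearEquiv R _ _ i e) =
      (Limits.colimit.ι (localCohomology.diagram (localCohomology.idealPowersDiagram I) i)
        (Opposite.op (Opposite.op n))).app (ModuleCat.of R Y) e :=
  congrArg _ (LinearEquiv.symm_apply_apply _ e)

lemma exists_extToLocH_eq (x : locH I i X) : ∃ n e, extToLocH I i n X e = x := by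
  have := hasColimit_idealPowersDiagram I i
  obtain ⟨j, y, hy⟩ := Limits.Concrete.isColimit_exists_rep _
    (Limits.isColimitOfPreserves ((evaluation _ _).obj (ModuleCat.of R X))
      (Limits.colimit.isColimit (localCohomology.diagram
        (localCohomology.idealPowersDiagram I) i))) x
  exact ⟨j.unop.unop, extLinearEquiv R _ _ i y, (extToLocH_extLinearEquiv y).trans hy⟩

lemma extToLocH_powQuotientMap_comp {m n : ℕ} (h : m ≤ n)
    (e : Ext (powQuotient I m) (ModuleCat.of R Y) i) :
    extToLocH I i n Y ((Ext.mk₀ (powQuotientMap I h)).comp e (zero_add i)) =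
      extToLocH I i m Y e := by
  have := hasColimit_idealPowersDiagram I i
  obtain ⟨e, rfl⟩ := (extLinearEquiv R _ _ i).surjective e
  rw [← extLinearEquiv_map_app, extToLocH_extLinearEquiv, extToLocH_extLinearEquiv]
  exact congrArg (fun f => (f.app (ModuleCat.of R Y)).hom e)
    (Limits.colimit.w (localCohomology.diagram (localCohomology.idealPowersDiagram I) i)
      (homOfLE h).op.op)

lemma exists_powQuotientMap_comp_eq_zero {n : ℕ} {e : Ext (powQuotient I n) (ModuleCat.of R Y) i}
    (he : extToLocH I i n Y e = 0) :
    ∃ (m : ℕ) (h : n ≤ m), (Ext.mk₀ (powQuotientMap I h)).comp e (zero_add i) = 0 := by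
  have := hasColimit_idealPowersDiagram I i
  obtain ⟨e, rfl⟩ := (extLinearEquiv R _ _ i).surjective e
  rw [extToLocH_extLinearEquiv] at he
  obtain ⟨k, f, g, hfg⟩ := Limits.Concrete.isColimit_exists_of_rep_eq.{0} _
    (Limits.isColimitOfPreserves ((evaluation _ _).obj (ModuleCat.of R Y))
      (Limits.colimit.isColimit (localCohomology.diagram
        (localCohomology.idealPowersDiagram I) i)))
    (i := Opposite.op (Opposite.op n)) (j := Opposite.op (Opposite.op n)) e 0
    (he.trans (map_zero _).symm)
  refine ⟨k.unop.unop, leOfHom f.unop.unop, ?_⟩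
  rw [← extLinearEquiv_map_app, LinearEquiv.map_eq_zero_iff]
  exact hfg.trans (map_zero _)

lemma locHMap_extToLocH (f : X →ₗ[R] Y) {n : ℕ} (e : Ext (powQuotient I n) (ModuleCat.of R X) i) :
    locHMap I i f (extToLocH I i n X e) =
      extToLocH I i n Y (e.comp (Ext.mk₀ (ModuleCat.ofHom f)) (add_zero i)) := by
  have := hasColimit_idealPowersDiagram I i
  obtain ⟨e, rfl⟩ := (extLinearEquiv R _ _ i).surjective e
  rw [← extLinearEquiv_map, extToLocH_extLinearEquiv, extToLocH_extLinearEquiv]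
  exact congrArg (fun f => f.hom e)
    ((Limits.colimit.ι (localCohomology.diagram (localCohomology.idealPowersDiagram I) i)
      (Opposite.op (Opposite.op n))).naturality (ModuleCat.ofHom f)).symm

lemma exists_locH_desc (φ : ∀ n, Ext (powQuotient I n) (ModuleCat.of R Y) i →ₗ[R] Z)
    (hφ : ∀ m n (h : m ≤ n) e,
      φ n ((Ext.mk₀ (powQuotientMap I h)).comp e (zero_add i)) = φ m e) :
    ∃ D : locH I i Y →ₗ[R] Z, ∀ n e, D (extToLocH I i n Y e) = φ n e := by
  have well_defined : ∀ m n e e', extToLocH I i m Y e = extToLocH I i n Y e' →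
      φ m e = φ n e' := by
    intro m n e e' h
    rw [← extToLocH_powQuotientMap_comp (le_max_left m n),
      ← extToLocH_powQuotientMap_comp (le_max_right m n), ← sub_eq_zero, ← map_sub] at h
    obtain ⟨k, hk, h0⟩ := exists_powQuotientMap_comp_eq_zero h
    rw [← hφ _ _ (le_max_left m n), ← hφ _ _ (le_max_right m n) e', ← sub_eq_zero, ← map_sub,
      ← hφ _ _ hk, h0, map_zero]
  choose N E hE using exists_extToLocH_eq (I := I) (i := i) (X := Y)
  have desc_apply : ∀ n e, φ (N (extToLocH I i n Y e)) (E (extToLocH I i n Y e)) = φ n e :=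
    fun n e => well_defined _ _ _ _ (hE _)
  refine ⟨{ toFun := fun x => φ (N x) (E x), map_add' := ?_, map_smul' := ?_ }, desc_apply⟩
  · intro x y
    conv_lhs => rw [← hE x, ← hE y]
    rw [← extToLocH_powQuotientMap_comp (le_max_left (N x) (N y)),
      ← extToLocH_powQuotientMap_comp (le_max_right (N x) (N y)) (E y),
      ← map_add, desc_apply, map_add, hφ, hφ]
  · intro r x
    conv_lhs => rw [← hE x]
    rw [← map_smul, desc_apply, map_smul, RingHom.id_apply]

lemma exists_pow_smul_locH_eq_zero (x : locH I i X) : ∃ n, ∀ a ∈ I ^ n, a • x = 0 := by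
  obtain ⟨n, e, rfl⟩ := exists_extToLocH_eq x
  refine ⟨n, fun a ha => ?_⟩
  have smul_id : a • 𝟙 (powQuotient I n) = 0 := by
    ext
    change a • (1 : R ⧸ I ^ n) = 0
    rw [Algebra.smul_def, mul_one]
    exact Ideal.Quotient.eq_zero_iff_mem.2 ha
  rw [← map_smul, ← Ext.mk₀_id_comp e, ← Ext.smul_comp, ← Ext.mk₀_smul, smul_id, Ext.mk₀_zero,
    Ext.zero_comp, map_zero]

variable (I i)

lemma locHMap_comp (g : Y →ₗ[R] Z) (f : X →ₗ[R] Y) :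
    locHMap I i (g ∘ₗ f) = locHMap I i g ∘ₗ locHMap I i f := by
  rw [locHMap, ModuleCat.ofHom_comp, Functor.map_comp]
  rfl

lemma locHMap_lsmul (r : R) :
    locHMap I i (LinearMap.lsmul R X r) = LinearMap.lsmul R (locH I i X) r := by
  ext x
  obtain ⟨n, e, rfl⟩ := exists_extToLocH_eq x
  rw [locHMap_extToLocH, LinearMap.lsmul_apply, ← map_smul, Ext.smul_eq_comp_mk₀]
  rfl

lemma locHMap_zero : locHMap I i (0 : X →ₗ[R] Y) = 0 := by
  ext x
  obtain ⟨n, e, rfl⟩ := exists_extToLocH_eq x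
  rw [locHMap_extToLocH, ModuleCat.ofHom_zero, Ext.mk₀_zero, Ext.comp_zero, map_zero]
  rfl

variable {f : X →ₗ[R] Y} {g : Y →ₗ[R] Z}

lemma shortExact_moduleCat_mk (hf : Function.Injective f) (hg : Function.Surjective g)
    (hfg : Function.Exact f g) :
    (ShortComplex.mk (ModuleCat.ofHom f) (ModuleCat.ofHom g)
      (ModuleCat.hom_ext hfg.linearMap_comp_eq_zero)).ShortExact where
  exact := (ShortComplex.ShortExact.moduleCat_exact_iff_function_exact _).2 hfg
  mono_f := (ModuleCat.mono_iff_injective _).2 hf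
  epi_g := (ModuleCat.epi_iff_surjective _).2 hg

lemma exact_locHMap (hf : Function.Injective f) (hg : Function.Surjective g)
    (hfg : Function.Exact f g) : Function.Exact (locHMap I i f) (locHMap I i g) := by
  have hS := shortExact_moduleCat_mk hf hg hfg
  refine fun y => ⟨fun h => ?_, ?_⟩
  · obtain ⟨n, e, rfl⟩ := exists_extToLocH_eq y
    rw [locHMap_extToLocH] at h
    obtain ⟨m, hm, h0⟩ := exists_powQuotientMap_comp_eq_zero h
    rw [← Ext.comp_assoc_of_third_deg_zero] at h0
    obtain ⟨e', he'⟩ := Ext.covariant_sequence_exact₂ (powQuotient I m) hS _ h0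
    refine ⟨extToLocH I i m X e', ?_⟩
    rw [locHMap_extToLocH, ← extToLocH_powQuotientMap_comp hm, ← he']
  · rintro ⟨x, rfl⟩
    rw [← LinearMap.comp_apply, ← locHMap_comp, hfg.linearMap_comp_eq_zero, locHMap_zero,
      LinearMap.zero_apply]

lemma exists_connecting_locH (hf : Function.Injective f) (hg : Function.Surjective g)
    (hfg : Function.Exact f g) :
    ∃ δ : locH I i Z →ₗ[R] locH I (i + 1) X,
      ∀ n e, δ (extToLocH I i n Z e) = extToLocH I (i + 1) n X
        (e.comp (shortExact_moduleCat_mk hf hg hfg).extClass rfl) := by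
  have hS := shortExact_moduleCat_mk hf hg hfg
  refine exists_locH_desc (fun n => extToLocH I (i + 1) n X ∘ₗ
    { toFun := fun e => e.comp hS.extClass rfl
      map_add' := fun _ _ => Ext.add_comp ..
      map_smul' := fun _ _ => Ext.smul_comp .. }) fun m n h e => ?_
  change extToLocH I (i + 1) n X (((Ext.mk₀ (powQuotientMap I h)).comp e (zero_add i)).comp
    hS.extClass rfl) = extToLocH I (i + 1) m X (e.comp hS.extClass rfl)
  rw [← extToLocH_powQuotientMap_comp h, Ext.comp_assoc]
  lia

section Connecting

variable {I i} (hf : Function.Injective f) (hg : Function.Surjective g) (hfg : Function.Exact f g)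
  {δ : locH I i Z →ₗ[R] locH I (i + 1) X}
  (hδ : ∀ n e, δ (extToLocH I i n Z e) = extToLocH I (i + 1) n X
    (e.comp (shortExact_moduleCat_mk hf hg hfg).extClass rfl))

include hδ

lemma exact_locHMap_connecting : Function.Exact (locHMap I i g) δ := by
  have hS := shortExact_moduleCat_mk hf hg hfg
  refine fun z => ⟨fun h => ?_, ?_⟩
  · obtain ⟨n, e, rfl⟩ := exists_extToLocH_eq z
    rw [hδ] at h
    obtain ⟨m, hm, h0⟩ := exists_powQuotientMap_comp_eq_zero h
    rw [← Ext.comp_assoc (h₁₂ := zero_add i) (h := by lia)] at h0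
    obtain ⟨e', he'⟩ := Ext.covariant_sequence_exact₃ (powQuotient I m) hS _ rfl h0
    refine ⟨extToLocH I i m Y e', ?_⟩
    rw [locHMap_extToLocH, ← extToLocH_powQuotientMap_comp hm, ← he']
  · rintro ⟨y, rfl⟩
    obtain ⟨n, e, rfl⟩ := exists_extToLocH_eq y
    have comp_extClass : (Ext.mk₀ (ModuleCat.ofHom g)).comp hS.extClass (zero_add 1) = 0 :=
      hS.comp_extClass
    rw [locHMap_extToLocH, hδ, Ext.comp_assoc_of_second_deg_zero, comp_extClass, Ext.comp_zero,
      map_zero]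

lemma exact_connecting_locHMap : Function.Exact δ (locHMap I (i + 1) f) := by
  have hS := shortExact_moduleCat_mk hf hg hfg
  refine fun x => ⟨fun h => ?_, ?_⟩
  · obtain ⟨n, e, rfl⟩ := exists_extToLocH_eq x
    rw [locHMap_extToLocH] at h
    obtain ⟨m, hm, h0⟩ := exists_powQuotientMap_comp_eq_zero h
    rw [← Ext.comp_assoc_of_third_deg_zero] at h0
    obtain ⟨e', he'⟩ := Ext.covariant_sequence_exact₁ (powQuotient I m) hS _ h0 rfl
    refine ⟨extToLocH I i m Z e', ?_⟩
    rw [hδ, ← extToLocH_powQuotientMap_comp hm, ← he']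
  · rintro ⟨z, rfl⟩
    obtain ⟨n, e, rfl⟩ := exists_extToLocH_eq z
    have extClass_comp : hS.extClass.comp (Ext.mk₀ (ModuleCat.ofHom f)) (add_zero 1) = 0 :=
      hS.extClass_comp
    rw [hδ, locHMap_extToLocH, Ext.comp_assoc_of_third_deg_zero, extClass_comp, Ext.comp_zero,
      map_zero]

end Connecting

lemma locHMap_zero_injective (hf : Function.Injective f) :
    Function.Injective (locHMap I 0 f) := by
  rw [injective_iff_map_eq_zero]
  intro x h
  obtain ⟨n, e, rfl⟩ := exists_extToLocH_eq x
  rw [locHMap_extToLocH] at h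
  obtain ⟨m, hm, h0⟩ := exists_powQuotientMap_comp_eq_zero h
  rw [← Ext.comp_assoc_of_third_deg_zero] at h0
  have : Mono (ModuleCat.ofHom f) := (ModuleCat.mono_iff_injective _).2 hf
  have := Ext.postcomp_mk₀_injective_of_mono (powQuotient I m) (ModuleCat.ofHom f)
    (a₁ := (Ext.mk₀ (powQuotientMap I hm)).comp e (zero_add 0)) (a₂ := 0)
    (by rw [map_zero]; exact h0)
  rw [← extToLocH_powQuotientMap_comp hm, this, map_zero]

lemma subsingleton_locH_succ_of_injective [Injective (ModuleCat.of R X)] :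
    Subsingleton (locH I (i + 1) X) := by
  refine subsingleton_of_forall_eq 0 fun x => ?_
  obtain ⟨n, e, rfl⟩ := exists_extToLocH_eq x
  rw [Ext.eq_zero_of_injective e, map_zero]

end LocalCohomology

/-! ### Torsion modules are acyclic -/

section PowTorsion

variable {A : Type*} [CommRing A] (I : Ideal A) (X : Type*) [AddCommGroup X] [Module A X]
  {Y : Type*} [AddCommGroup Y] [Module A Y]

/-- The `I`-torsion functor `Γ_I`: the submodule of elements killed by some power of `I`. -/
def powTorsion : Submodule A X where
  carrier := {x | ∃ n : ℕ, ∀ a ∈ I ^ n, a • x = 0}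
  zero_mem' := ⟨0, fun _ _ => smul_zero _⟩
  add_mem' := by
    rintro x y ⟨n, hn⟩ ⟨m, hm⟩
    refine ⟨max n m, fun a ha => ?_⟩
    rw [smul_add, hn a (Ideal.pow_le_pow_right (le_max_left _ _) ha),
      hm a (Ideal.pow_le_pow_right (le_max_right _ _) ha), add_zero]
  smul_mem' := by
    rintro c x ⟨n, hn⟩
    exact ⟨n, fun a ha => by rw [smul_comm, hn a ha, smul_zero]⟩

/-- A module is `I`-torsion if each of its elements is killed by some power of `I`. -/
def IsPowTorsion : Prop := ∀ x : X, ∃ n : ℕ, ∀ a ∈ I ^ n, a • x = 0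

variable {I X}

lemma isPowTorsion_powTorsion : IsPowTorsion I (powTorsion I X) := by
  rintro ⟨x, n, hn⟩
  exact ⟨n, fun a ha => Subtype.ext (hn a ha)⟩

lemma IsPowTorsion.of_injective (hX : IsPowTorsion I X) {f : Y →ₗ[A] X}
    (hf : Function.Injective f) : IsPowTorsion I Y := by
  intro y
  obtain ⟨n, hn⟩ := hX (f y)
  exact ⟨n, fun a ha => hf (by rw [map_smul, hn a ha, map_zero])⟩

lemma IsPowTorsion.of_surjective (hX : IsPowTorsion I X) {f : X →ₗ[A] Y}
    (hf : Function.Surjective f) : IsPowTorsion I Y := by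
  intro y
  obtain ⟨x, rfl⟩ := hf y
  obtain ⟨n, hn⟩ := hX x
  exact ⟨n, fun a ha => by rw [← map_smul, hn a ha, map_zero]⟩

lemma IsPowTorsion.exists_pow_le_annihilator [Module.Finite A X] (hX : IsPowTorsion I X) :
    ∃ n : ℕ, I ^ n ≤ Module.annihilator A X := by
  obtain ⟨s, hs⟩ := Module.Finite.fg_top (R := A) (M := X)
  choose N hN using hX
  refine ⟨s.sup N, fun a ha => ?_⟩
  rw [← Submodule.annihilator_top, ← hs, Submodule.mem_annihilator_span]
  exact fun y => hN y a (Ideal.pow_le_pow_right (Finset.le_sup (f := N) y.2) ha)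

lemma exists_pow_smul_top_comap_le [IsNoetherianRing A] [Module.Finite A X] (I : Ideal A)
    (N : Submodule A X) (n : ℕ) :
    ∃ m, n ≤ m ∧ (I ^ m • (⊤ : Submodule A X)).comap N.subtype ≤ I ^ n • (⊤ : Submodule A N) := by
  obtain ⟨k, hk⟩ := I.exists_pow_inf_eq_pow_smul N
  refine ⟨n + k, Nat.le_add_right n k, fun y hy => ?_⟩
  have hy' : (y : X) ∈ I ^ (n + k) • (⊤ : Submodule A X) ⊓ N := ⟨hy, y.2⟩
  rw [hk _ (Nat.le_add_left k n), Nat.add_sub_cancel] at hy'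
  have smul_eq_map : I ^ n • N = (I ^ n • (⊤ : Submodule A N)).map N.subtype := by
    rw [Submodule.map_smul'', Submodule.map_subtype_top]
  obtain ⟨z, hz, hzy⟩ := smul_eq_map.le (Submodule.smul_mono le_rfl inf_le_right hy')
  rwa [← show z = y from Subtype.ext hzy]

end PowTorsion

section InjectiveTorsion

variable {A : Type u} [CommRing A] {E X Y : Type u} [AddCommGroup E] [Module A E]
  [AddCommGroup X] [Module A X] [AddCommGroup Y] [Module A Y]

lemma exists_linearMap_extension [Module.Injective A E] (f : X →ₗ[A] Y) (g : X →ₗ[A] E)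
    (h : LinearMap.ker f ≤ LinearMap.ker g) : ∃ k : Y →ₗ[A] E, k ∘ₗ f = g := by
  obtain ⟨k, hk⟩ := Module.Injective.out ((LinearMap.ker f).liftQ f le_rfl)
    (LinearMap.ker_eq_bot.1 (Submodule.ker_liftQ_eq_bot _ _ _ le_rfl))
    ((LinearMap.ker f).liftQ g h)
  exact ⟨k, LinearMap.ext fun x => hk (Submodule.Quotient.mk x)⟩

lemma injective_powTorsion [IsNoetherianRing A] [Module.Injective A E] (I : Ideal A) :
    Module.Injective A (powTorsion I E) := by
  refine Module.Baer.injective fun J g => ?_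
  obtain ⟨n, hn⟩ := (isPowTorsion_powTorsion.of_injective
    (LinearMap.range g).injective_subtype).exists_pow_le_annihilator
  obtain ⟨m, -, hm⟩ := exists_pow_smul_top_comap_le I J n
  have ker_le : LinearMap.ker ((I ^ m).mkQ ∘ₗ J.subtype) ≤
      LinearMap.ker ((powTorsion I E).subtype ∘ₗ g) := by
    rw [LinearMap.ker_comp, Submodule.ker_mkQ, LinearMap.ker_comp, Submodule.ker_subtype,
      ← LinearMap.ker]
    rw [smul_eq_mul, Ideal.mul_top] at hm
    refine hm.trans (Submodule.smul_le.2 fun a ha y _ => ?_)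
    rw [LinearMap.mem_ker, map_smul]
    exact congrArg Subtype.val (Module.mem_annihilator.1 (hn ha) ⟨g y, y, rfl⟩)
  obtain ⟨h, hh⟩ := exists_linearMap_extension _ _ ker_le
  have h_mem : h (Submodule.Quotient.mk 1) ∈ powTorsion I E := by
    refine ⟨m, fun a ha => ?_⟩
    rw [← map_smul, ← Submodule.Quotient.mk_smul, smul_eq_mul, mul_one,
      (Submodule.Quotient.mk_eq_zero _).2 ha, map_zero]
  refine ⟨LinearMap.toSpanSingleton A _ ⟨_, h_mem⟩, fun x hx => Subtype.ext ?_⟩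
  rw [LinearMap.toSpanSingleton_apply, Submodule.coe_smul, ← map_smul,
    ← Submodule.Quotient.mk_smul, smul_eq_mul, mul_one]
  exact LinearMap.congr_fun hh ⟨x, hx⟩

lemma exists_injective_embedding (X : Type u) [AddCommGroup X] [Module A X] :
    ∃ (E : ModuleCat.{u} A) (f : X →ₗ[A] E), Module.Injective A E ∧ Function.Injective f := by
  refine ⟨Injective.under (ModuleCat.of A X), (Injective.ι (ModuleCat.of A X)).hom, ?_,
    (ModuleCat.mono_iff_injective (Injective.ι (ModuleCat.of A X))).1 inferInstance⟩
  rw [Module.injective_iff_injective_object]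
  exact inferInstanceAs (Injective (Injective.under (ModuleCat.of A X)))

lemma IsPowTorsion.exists_injective_embedding [IsNoetherianRing A] {I : Ideal A}
    (hX : IsPowTorsion I X) : ∃ (E : ModuleCat.{u} A) (f : X →ₗ[A] E),
      Module.Injective A E ∧ IsPowTorsion I E ∧ Function.Injective f := by
  obtain ⟨E, f, hE, hf⟩ := _root_.exists_injective_embedding (A := A) X
  refine ⟨ModuleCat.of A (powTorsion I E), f.codRestrict _ fun x => ?_, injective_powTorsion I,
    isPowTorsion_powTorsion, fun x y h => hf (congrArg Subtype.val h)⟩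
  obtain ⟨n, hn⟩ := hX x
  exact ⟨n, fun a ha => by rw [← map_smul, hn a ha, map_zero]⟩

end InjectiveTorsion

section LocalCohomologyTorsion

open Abelian

variable (I : Ideal R) {X Y : Type} [AddCommGroup X] [Module R X] [AddCommGroup Y] [Module R Y]

lemma isPowTorsion_locH (i : ℕ) : IsPowTorsion I (locH I i X) := exists_pow_smul_locH_eq_zero

lemma subsingleton_locH_top (i : ℕ) : Subsingleton (locH (⊤ : Ideal R) i X) := by
  refine subsingleton_of_forall_eq 0 fun x => ?_
  obtain ⟨n, hn⟩ := isPowTorsion_locH ⊤ i x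
  rw [← hn 1 ((Ideal.top_pow R n).symm ▸ Submodule.mem_top), one_smul]

lemma exists_locH_zero_desc (X : Type) [AddCommGroup X] [Module R X] :
    ∃ θ : locH I 0 X →ₗ[R] X, ∀ n (f : powQuotient I n ⟶ ModuleCat.of R X),
      θ (extToLocH I 0 n X (Ext.mk₀ f)) = f.hom (1 : R ⧸ I ^ n) := by
  have addEquiv₀_mk₀ : ∀ n (f : powQuotient I n ⟶ ModuleCat.of R X),
      Ext.addEquiv₀ (Ext.mk₀ f) = f := fun n f => Ext.addEquiv₀.right_inv f
  obtain ⟨θ, hθ⟩ := exists_locH_desc (I := I) (Y := X) (Z := X)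
    (fun n =>
      { toFun := fun e => (Ext.addEquiv₀ e).hom (1 : R ⧸ I ^ n)
        map_add' := fun e e' => by rw [map_add]; rfl
        map_smul' := fun r e => by
          obtain ⟨f, rfl⟩ := (Ext.mk₀_bijective _ _).2 e
          rw [← Ext.mk₀_smul, addEquiv₀_mk₀, addEquiv₀_mk₀]
          rfl })
    (fun m n h e => by
      obtain ⟨f, rfl⟩ := (Ext.mk₀_bijective _ _).2 e
      rw [Ext.mk₀_comp_mk₀]
      change (Ext.addEquiv₀ (Ext.mk₀ (powQuotientMap I h ≫ f))).hom _ =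
        (Ext.addEquiv₀ (Ext.mk₀ f)).hom _
      rw [addEquiv₀_mk₀, addEquiv₀_mk₀]
      rfl)
  exact ⟨θ, fun n f => (hθ n _).trans
    (congrArg (fun f => f.hom (1 : R ⧸ I ^ n)) (addEquiv₀_mk₀ n f))⟩

/-- The canonical embedding `H^0_I(X) → X`, whose image is the `I`-torsion submodule. It sends the
class of `f : R ⧸ I ^ n → X` to `f 1`. -/
def locHZeroToModule (X : Type) [AddCommGroup X] [Module R X] : locH I 0 X →ₗ[R] X :=
  (exists_locH_zero_desc I X).choose

lemma locHZeroToModule_extToLocH {n : ℕ} (f : powQuotient I n ⟶ ModuleCat.of R X) :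
    locHZeroToModule I X (extToLocH I 0 n X (Ext.mk₀ f)) = f.hom (1 : R ⧸ I ^ n) :=
  (exists_locH_zero_desc I X).choose_spec n f

lemma locHZeroToModule_locHMap (f : X →ₗ[R] Y) (x : locH I 0 X) :
    locHZeroToModule I Y (locHMap I 0 f x) = f (locHZeroToModule I X x) := by
  obtain ⟨n, e, rfl⟩ := exists_extToLocH_eq x
  obtain ⟨g, rfl⟩ := (Ext.mk₀_bijective _ _).2 e
  rw [locHMap_extToLocH, Ext.mk₀_comp_mk₀, locHZeroToModule_extToLocH,
    locHZeroToModule_extToLocH]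
  rfl

lemma locHZeroToModule_injective : Function.Injective (locHZeroToModule I X) := by
  rw [injective_iff_map_eq_zero]
  intro x h
  obtain ⟨n, e, rfl⟩ := exists_extToLocH_eq x
  obtain ⟨g, rfl⟩ := (Ext.mk₀_bijective _ _).2 e
  rw [locHZeroToModule_extToLocH] at h
  have : g = 0 := by
    ext
    exact h
  rw [this, Ext.mk₀_zero, map_zero]

lemma exists_locHZeroToModule_eq {y : X} (hy : y ∈ powTorsion I X) :
    ∃ x, locHZeroToModule I X x = y := by
  obtain ⟨n, hn⟩ := hy
  refine ⟨extToLocH I 0 n X (Ext.mk₀ (ModuleCat.ofHom (Submodule.liftQ (I ^ n)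
    (LinearMap.toSpanSingleton R X y) hn))), ?_⟩
  rw [locHZeroToModule_extToLocH]
  exact one_smul R y

lemma locHMap_zero_surjective {f : X →ₗ[R] Y} (hf : Function.Surjective f)
    (hX : IsPowTorsion I X) : Function.Surjective (locHMap I 0 f) := by
  intro z
  obtain ⟨y, hy⟩ := hf (locHZeroToModule I Y z)
  obtain ⟨w, rfl⟩ := exists_locHZeroToModule_eq I (hX y)
  exact ⟨w, locHZeroToModule_injective I (by rw [locHZeroToModule_locHMap, hy])⟩

lemma IsPowTorsion.exists_surjective_connecting [IsNoetherianRing R] {I : Ideal R}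
    (hX : IsPowTorsion I X) (i : ℕ) : ∃ (E C : ModuleCat.{0} R) (g : E →ₗ[R] C)
      (δ : locH I i C →ₗ[R] locH I (i + 1) X), IsPowTorsion I E ∧ Function.Surjective g ∧
        Function.Exact (locHMap I i g) δ ∧ Function.Surjective δ := by
  obtain ⟨E, f, hE, hEtors, hf⟩ := hX.exists_injective_embedding
  have hg := (LinearMap.range f).mkQ_surjective
  have hfg := LinearMap.exact_map_mkQ_range f
  obtain ⟨δ, hδ⟩ := exists_connecting_locH I i hf hg hfg
  have : Injective (ModuleCat.of R E) := by rwa [← Module.injective_iff_injective_object]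
  have := subsingleton_locH_succ_of_injective I i (X := E)
  exact ⟨E, ModuleCat.of R (E ⧸ LinearMap.range f), (LinearMap.range f).mkQ, δ, hEtors, hg,
    exact_locHMap_connecting hf hg hfg hδ, fun x =>
      (exact_connecting_locHMap hf hg hfg hδ x).1 (Subsingleton.elim _ _)⟩

lemma IsPowTorsion.subsingleton_locH_succ [IsNoetherianRing R] {I : Ideal R}
    (hX : IsPowTorsion I X) (i : ℕ) : Subsingleton (locH I (i + 1) X) := by
  induction i generalizing X with
  | zero =>
    obtain ⟨E, C, g, δ, hE, hg, hgδ, hδ⟩ := hX.exists_surjective_connecting 0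
    refine subsingleton_of_forall_eq 0 fun x => ?_
    obtain ⟨z, rfl⟩ := hδ x
    exact (hgδ z).2 (locHMap_zero_surjective I hg hE z)
  | succ i ih =>
    obtain ⟨E, C, g, δ, hE, hg, -, hδ⟩ := hX.exists_surjective_connecting (i + 1)
    have := ih (hE.of_surjective hg)
    exact hδ.subsingleton

end LocalCohomologyTorsion

/-! ### Localized local cohomology -/

section LocHAt

variable (I : Ideal R) (q : PrimeSpectrum R) (i : ℕ) (X : Type) [AddCommGroup X] [Module R X]
  {Y Z : Type} [AddCommGroup Y] [Module R Y] [AddCommGroup Z] [Module R Z]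

/-- The localization of `H^i_I(X)` at the prime `q`. -/
abbrev locHAt : Type := LocalizedModule q.asIdeal.primeCompl (locH I i X)

variable {X}

/-- The map between localized local cohomology modules induced by a linear map `f`. -/
def locHAtMap (f : X →ₗ[R] Y) :
    locHAt I q i X →ₗ[Localization q.asIdeal.primeCompl] locHAt I q i Y :=
  LocalizedModule.map q.asIdeal.primeCompl (locHMap I i f)

variable {I q i}

lemma locHAtMap_mk (f : X →ₗ[R] Y) (x : locH I i X) (s : q.asIdeal.primeCompl) :
    locHAtMap I q i f (LocalizedModule.mk x s) = LocalizedModule.mk (locHMap I i f x) s :=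
  LocalizedModule.map_mk ..

lemma locHAtMap_comp_apply (g : Y →ₗ[R] Z) (f : X →ₗ[R] Y) (t : locHAt I q i X) :
    locHAtMap I q i (g ∘ₗ f) t = locHAtMap I q i g (locHAtMap I q i f t) := by
  induction t using LocalizedModule.induction_on with
  | _ x s => rw [locHAtMap_mk, locHMap_comp, locHAtMap_mk, locHAtMap_mk, LinearMap.comp_apply]

lemma locHAtMap_lsmul_apply (r : R) (t : locHAt I q i X) :
    locHAtMap I q i (LinearMap.lsmul R X r) t = r • t := by
  induction t using LocalizedModule.induction_on with
  | _ x s => rw [locHAtMap_mk, locHMap_lsmul, LocalizedModule.smul'_mk, LinearMap.lsmul_apply]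

lemma locHAtMap_id_apply (t : locHAt I q i X) : locHAtMap I q i LinearMap.id t = t := by
  have lsmul_one : LinearMap.lsmul R X 1 = LinearMap.id := by
    ext
    simp
  rw [← lsmul_one, locHAtMap_lsmul_apply, one_smul]

lemma locHAtMap_equiv_injective (e : X ≃ₗ[R] Y) :
    Function.Injective (locHAtMap I q i e.toLinearMap) :=
  Function.LeftInverse.injective (g := locHAtMap I q i e.symm.toLinearMap) fun t => by
    rw [← locHAtMap_comp_apply, LinearEquiv.symm_comp, locHAtMap_id_apply]

lemma isPowTorsion_locHAt : IsPowTorsion I (locHAt I q i X) := by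
  intro t
  induction t using LocalizedModule.induction_on with
  | _ x s =>
    obtain ⟨n, hn⟩ := isPowTorsion_locH I i x
    exact ⟨n, fun a ha => by rw [LocalizedModule.smul'_mk, hn a ha, LocalizedModule.zero_mk]⟩

lemma IsPowTorsion.subsingleton_locHAt_succ [IsNoetherianRing R] (hX : IsPowTorsion I X) :
    Subsingleton (locHAt I q (i + 1) X) := by
  have := hX.subsingleton_locH_succ i
  infer_instance

lemma isSMulRegular_locHAt {s : R} (hs : s ∉ q.asIdeal) : IsSMulRegular (locHAt I q i X) s :=
  ((Module.End.isUnit_iff _).1 (IsLocalizedModule.map_units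
    (LocalizedModule.mkLinearMap q.asIdeal.primeCompl (locH I i X))
    (⟨s, hs⟩ : q.asIdeal.primeCompl))).injective

lemma annihilator_le_annihilator_locHAt :
    Module.annihilator R X ≤ Module.annihilator R (locHAt I q i X) := by
  intro a ha
  have lsmul_eq_zero : LinearMap.lsmul R X a = 0 := LinearMap.ext (Module.mem_annihilator.1 ha)
  refine Module.mem_annihilator.2 fun t => ?_
  rw [← locHAtMap_lsmul_apply, lsmul_eq_zero, locHAtMap, locHMap_zero, map_zero,
    LinearMap.zero_apply]

lemma smul_locHAt_eq_zero {s a : R} (hs : s ∉ q.asIdeal) (h : s * a ∈ Module.annihilator R X)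
    (t : locHAt I q i X) : a • t = 0 := by
  apply (isSMulRegular_locHAt hs).right_eq_zero_of_smul
  rw [← mul_smul]
  exact Module.mem_annihilator.1 (annihilator_le_annihilator_locHAt h) t

lemma subsingleton_locHAt_of_mem_annihilator {s : R} (hs : s ∉ q.asIdeal)
    (h : s ∈ Module.annihilator R X) : Subsingleton (locHAt I q i X) :=
  subsingleton_of_forall_eq 0 fun t => by
    rw [← one_smul R t, smul_locHAt_eq_zero hs (by rwa [mul_one])]

instance subsingleton_locHAt [Subsingleton X] : Subsingleton (locHAt I q i X) :=
  subsingleton_locHAt_of_mem_annihilator q.isPrime.one_notMem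
    (Module.mem_annihilator.2 fun _ => Subsingleton.elim _ _)

lemma subsingleton_locHAt_of_isSMulRegular {x : R} (hx : x ∈ I)
    (h : IsSMulRegular (locHAt I q i X) x) : Subsingleton (locHAt I q i X) := by
  refine subsingleton_of_forall_eq 0 fun t => ?_
  obtain ⟨n, hn⟩ := isPowTorsion_locHAt t
  exact (h.pow n).right_eq_zero_of_smul (hn _ (Ideal.pow_mem_pow hx n))

section LongExactSequence

variable {f : X →ₗ[R] Y} {g : Y →ₗ[R] Z}

lemma locHAtMap_zero_injective (hf : Function.Injective f) :
    Function.Injective (locHAtMap I q 0 f) :=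
  LocalizedModule.map_injective _ _ (locHMap_zero_injective I hf)

lemma exact_locHAtMap (hf : Function.Injective f) (hg : Function.Surjective g)
    (hfg : Function.Exact f g) : Function.Exact (locHAtMap I q i f) (locHAtMap I q i g) :=
  LocalizedModule.map_exact q.asIdeal.primeCompl _ _ (exact_locHMap I i hf hg hfg)

lemma exists_connecting_locHAt (hf : Function.Injective f) (hg : Function.Surjective g)
    (hfg : Function.Exact f g) :
    ∃ δ : locHAt I q i Z →ₗ[Localization q.asIdeal.primeCompl] locHAt I q (i + 1) X,
      Function.Exact (locHAtMap I q i g) δ ∧ Function.Exact δ (locHAtMap I q (i + 1) f) := by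
  obtain ⟨δ, hδ⟩ := exists_connecting_locH I i hf hg hfg
  exact ⟨LocalizedModule.map q.asIdeal.primeCompl δ,
    LocalizedModule.map_exact _ _ _ (exact_locHMap_connecting hf hg hfg hδ),
    LocalizedModule.map_exact _ _ _ (exact_connecting_locHMap hf hg hfg hδ)⟩

lemma subsingleton_locHAt_of_exact (hf : Function.Injective f) (hg : Function.Surjective g)
    (hfg : Function.Exact f g) [Subsingleton (locHAt I q i X)] [Subsingleton (locHAt I q i Z)] :
    Subsingleton (locHAt I q i Y) := by
  refine subsingleton_of_forall_eq 0 fun t => ?_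
  obtain ⟨s, rfl⟩ := (exact_locHAtMap hf hg hfg t).1 (Subsingleton.elim _ _)
  rw [Subsingleton.elim s 0, map_zero]

lemma locHAtMap_succ_injective (hf : Function.Injective f) (hg : Function.Surjective g)
    (hfg : Function.Exact f g) [Subsingleton (locHAt I q i Z)] :
    Function.Injective (locHAtMap I q (i + 1) f) := by
  obtain ⟨δ, -, hδ⟩ := exists_connecting_locHAt (I := I) (q := q) (i := i) hf hg hfg
  rw [injective_iff_map_eq_zero]
  intro t ht
  obtain ⟨s, rfl⟩ := (hδ t).1 ht
  rw [Subsingleton.elim s 0, map_zero]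

lemma locHAtMap_surjective (f : X →ₗ[R] Y) [Subsingleton (locHAt I q (i + 1) (LinearMap.ker f))]
    [Subsingleton (locHAt I q i (Y ⧸ LinearMap.range f))] :
    Function.Surjective (locHAtMap I q i f) := by
  obtain ⟨δ, hδ, -⟩ := exists_connecting_locHAt (I := I) (q := q) (i := i)
    (LinearMap.ker f).injective_subtype f.surjective_rangeRestrict
    (g := f.rangeRestrict) fun y => by
      rw [← LinearMap.mem_ker, LinearMap.ker_rangeRestrict, Submodule.coe_subtype,
        Subtype.range_coe, SetLike.mem_coe]
  have exact_range := exact_locHAtMap (I := I) (q := q) (i := i)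
    (LinearMap.range f).injective_subtype (LinearMap.range f).mkQ_surjective
    (LinearMap.exact_subtype_mkQ _)
  intro t
  obtain ⟨s, rfl⟩ := (exact_range t).1 (Subsingleton.elim _ _)
  obtain ⟨u, rfl⟩ := (hδ s).1 (Subsingleton.elim _ _)
  exact ⟨u, locHAtMap_comp_apply (LinearMap.range f).subtype f.rangeRestrict u⟩

end LongExactSequence

section QuotSMulTop

variable {x : R}

open scoped Pointwise in
lemma exact_lsmul_mkQ {A : Type*} [CommRing A] (x : A) (X : Type*) [AddCommGroup X] [Module A X] :
    Function.Exact (LinearMap.lsmul A X x) (x • (⊤ : Submodule A X)).mkQ := by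
  rw [LinearMap.exact_iff, Submodule.ker_mkQ, LinearMap.range_eq_map]
  rfl

lemma subsingleton_locHAt_zero (hxI : x ∈ I) (hx : IsSMulRegular X x) :
    Subsingleton (locHAt I q 0 X) := by
  refine subsingleton_locHAt_of_isSMulRegular hxI fun s t hst => ?_
  simp only [← locHAtMap_lsmul_apply] at hst
  exact locHAtMap_zero_injective (f := LinearMap.lsmul R X x) hx hst

lemma subsingleton_locHAt_succ_of_quotSMulTop (hxI : x ∈ I) (hx : IsSMulRegular X x)
    [Subsingleton (locHAt I q i (QuotSMulTop x X))] : Subsingleton (locHAt I q (i + 1) X) := by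
  refine subsingleton_locHAt_of_isSMulRegular hxI fun s t hst => ?_
  simp only [← locHAtMap_lsmul_apply] at hst
  exact locHAtMap_succ_injective (f := LinearMap.lsmul R X x) hx (Submodule.mkQ_surjective _)
    (exact_lsmul_mkQ x X) hst

end QuotSMulTop

end LocHAt

/-! ### Vanishing above the codimension -/

section PrimeCodim

variable {A : Type*} [CommRing A] [IsNoetherianRing A] {q P Q : PrimeSpectrum A}

lemma exists_coheight_Iic_le (q : PrimeSpectrum A) :
    ∃ n : ℕ, ∀ P : Set.Iic q, Order.coheight P ≤ n := by
  obtain ⟨n, height_eq⟩ := ENat.ne_top_iff_exists.1 (Ideal.height_ne_top q.isPrime.ne_top)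
  refine ⟨n, fun P => ?_⟩
  have coheight_le := Order.coheight_le_krullDim P
  rwa [← Order.height_eq_krullDim_Iic, ← q.height_eq_orderHeight, ← height_eq,
    WithBot.coe_le_coe] at coheight_le

lemma coheight_Iic_lt_top (P : Set.Iic q) : Order.coheight P < ⊤ :=
  (exists_coheight_Iic_le q).elim fun n hn => (hn P).trans_lt (ENat.natCast_lt_top n)

open Classical in
/-- The codimension of the prime `P` in `q`: the supremum of the lengths of chains of primes from
`P` to `q`, with junk value `0` if `P ≰ q`. -/
def primeCodim (q P : PrimeSpectrum A) : ℕ :=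
  if h : P ≤ q then (Order.coheight (⟨P, h⟩ : Set.Iic q)).toNat else 0

lemma coe_primeCodim (h : P ≤ q) :
    (primeCodim q P : ℕ∞) = Order.coheight (⟨P, h⟩ : Set.Iic q) := by
  rw [primeCodim, dif_pos h, ENat.natCast_toNat (coheight_Iic_lt_top _).ne]

lemma bddAbove_primeCodim (q : PrimeSpectrum A) : BddAbove (primeCodim q '' Set.Iic q) := by
  obtain ⟨n, hn⟩ := exists_coheight_Iic_le q
  refine ⟨n, ?_⟩
  rintro _ ⟨P, hP, rfl⟩
  rw [← Nat.cast_le (α := ℕ∞), coe_primeCodim hP]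
  exact hn ⟨P, hP⟩

lemma primeCodim_lt_primeCodim (hPQ : P < Q) (hQ : Q ≤ q) : primeCodim q Q < primeCodim q P := by
  have coheight_lt := Order.coheight_strictAnti
    (show (⟨P, hPQ.le.trans hQ⟩ : Set.Iic q) < ⟨Q, hQ⟩ from hPQ) (coheight_Iic_lt_top _)
  rwa [← coe_primeCodim, ← coe_primeCodim, Nat.cast_lt] at coheight_lt

lemma primeCodim_le_primeCodim (hPQ : P ≤ Q) (hQ : Q ≤ q) : primeCodim q Q ≤ primeCodim q P := by
  rcases hPQ.eq_or_lt with rfl | h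
  · rfl
  · exact (primeCodim_lt_primeCodim h hQ).le

lemma primeCodim_self (q : PrimeSpectrum A) : primeCodim q q = 0 := by
  rw [← Nat.cast_eq_zero (R := ℕ∞), coe_primeCodim le_rfl, Order.coheight_eq_zero]
  exact fun P _ => P.2

lemma primeCodim_eq_zero_iff (h : P ≤ q) : primeCodim q P = 0 ↔ P = q := by
  refine ⟨fun h_zero => ?_, fun h_eq => h_eq ▸ primeCodim_self q⟩
  by_contra h_ne
  have := primeCodim_lt_primeCodim (h.lt_of_ne h_ne) le_rfl
  omega

lemma exists_primeCodim_eq (h : P ≤ q) {d : ℕ} (hd : primeCodim q P = d + 1) :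
    ∃ Q, P < Q ∧ Q ≤ q ∧ primeCodim q Q = d := by
  have coheight_eq := coe_primeCodim h
  rw [hd, Nat.cast_succ, eq_comm, Order.coheight_eq_coe_add_one_iff] at coheight_eq
  obtain ⟨-, ⟨⟨Q, hQ⟩, hPQ, hQd⟩, -⟩ := coheight_eq
  rw [← coe_primeCodim hQ, Nat.cast_inj] at hQd
  exact ⟨Q, hPQ, hQ, hQd⟩

lemma exists_mem_notMem_of_lt {A : Type*} [CommRing A] {q P : PrimeSpectrum A} {I : Ideal A}
    (hq : q.asIdeal ∈ I.minimalPrimes) (h : P < q) : ∃ x ∈ I, x ∉ P.asIdeal :=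
  SetLike.not_le_iff_exists.1 fun hIP => h.not_ge (hq.2 ⟨P.isPrime, hIP⟩ h.le)

end PrimeCodim

section Quotient

variable {A : Type*} [CommRing A]

lemma mem_support_quotient_iff {J : Ideal A} {Q : PrimeSpectrum A} :
    Q ∈ Module.support A (A ⧸ J) ↔ J ≤ Q.asIdeal := by
  rw [Module.mem_support_iff_of_finite, Ideal.annihilator_quotient]

lemma isSMulRegular_quotient {P : PrimeSpectrum A} {x : A} (hx : x ∉ P.asIdeal) :
    IsSMulRegular (A ⧸ P.asIdeal) x := by
  rw [isSMulRegular_iff_right_eq_zero_of_smul]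
  intro y hy
  rw [Algebra.smul_def] at hy
  exact (mul_eq_zero.1 hy).resolve_left fun h => hx (Ideal.Quotient.eq_zero_iff_mem.1 h)

lemma isPowTorsion_quotient {I J : Ideal A} (h : I ≤ J) : IsPowTorsion I (A ⧸ J) := by
  refine fun y => ⟨1, fun a ha => ?_⟩
  rw [pow_one] at ha
  rw [Algebra.smul_def, Ideal.Quotient.algebraMap_eq, Ideal.Quotient.eq_zero_iff_mem.2 (h ha),
    zero_mul]

end Quotient

section Vanishing

variable {I : Ideal R} {q P : PrimeSpectrum R} {i : ℕ}

lemma smul_locHAt_quotient_eq_zero {a : R} (ha : a ∈ P.asIdeal)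
    (t : locHAt I q i (R ⧸ P.asIdeal)) : a • t = 0 :=
  Module.mem_annihilator.1 (annihilator_le_annihilator_locHAt <| by
    rwa [Ideal.annihilator_quotient]) t

lemma subsingleton_locHAt_quotient_of_not_le (hP : ¬P ≤ q) :
    Subsingleton (locHAt I q i (R ⧸ P.asIdeal)) := by
  obtain ⟨s, hs, hsq⟩ := SetLike.not_le_iff_exists.1 (show ¬P.asIdeal ≤ q.asIdeal from hP)
  exact subsingleton_locHAt_of_mem_annihilator hsq (by rwa [Ideal.annihilator_quotient])

variable [IsNoetherianRing R] {X : Type} [AddCommGroup X] [Module R X] [Module.Finite R X]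

lemma subsingleton_locHAt_of_forall_support (hX : ∀ P ∈ Module.support R X, P ≤ q →
    Subsingleton (locHAt I q i (R ⧸ P.asIdeal))) : Subsingleton (locHAt I q i X) := by
  revert hX
  induction ‹Module.Finite R X› using
    IsNoetherianRing.induction_on_isQuotientEquivQuotientPrime R with
  | subsingleton N => exact fun _ => inferInstance
  | quotient N P e =>
    intro hN
    have : Subsingleton (locHAt I q i (R ⧸ P.asIdeal)) := by
      by_cases hP : P ≤ q
      · exact hN P (by rw [e.support_eq, mem_support_quotient_iff]) hP
      · exact subsingleton_locHAt_quotient_of_not_le hP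
    exact (locHAtMap_equiv_injective (I := I) (q := q) (i := i) e).subsingleton
  | exact N₁ N₂ N₃ f g hf hg hfg h₁ h₃ =>
    intro hN
    rw [Module.support_of_exact hfg hf hg] at hN
    have := h₁ fun P hP => hN P (Or.inl hP)
    have := h₃ fun P hP => hN P (Or.inr hP)
    exact subsingleton_locHAt_of_exact hf hg hfg

/-- Grothendieck vanishing, for codimension in `q` in place of dimension. -/
lemma subsingleton_locHAt_of_primeCodim_lt (hq : q.asIdeal ∈ I.minimalPrimes)
    (hX : ∀ Q ∈ Module.support R X, Q ≤ q → primeCodim q Q < i) :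
    Subsingleton (locHAt I q i X) := by
  induction i generalizing X with
  | zero => exact subsingleton_locHAt_of_forall_support fun P hP hPq => by simpa using hX P hP hPq
  | succ i ih =>
    refine subsingleton_locHAt_of_forall_support fun P hP hPq => ?_
    rcases hPq.eq_or_lt with rfl | hlt
    · exact (isPowTorsion_quotient hq.1.2).subsingleton_locHAt_succ
    · obtain ⟨x, hxI, hxP⟩ := exists_mem_notMem_of_lt hq hlt
      have : Subsingleton (locHAt I q i (QuotSMulTop x (R ⧸ P.asIdeal))) := by
        refine ih fun Q hQ hQq => ?_
        rw [Module.support_quotSMulTop] at hQ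
        have hPQ : P < Q := lt_of_le_of_ne (mem_support_quotient_iff.1 hQ.1)
          fun h => hxP (h ▸ hQ.2 rfl)
        exact (primeCodim_lt_primeCodim hPQ hQq).trans_le (Nat.le_of_lt_succ (hX P hP hPq))
      exact subsingleton_locHAt_succ_of_quotSMulTop hxI (isSMulRegular_quotient hxP)

end Vanishing

/-! ### Artinianness -/

section Melkersson

lemma exists_eventually_const_of_antitone {α : Type*} [PartialOrder α] [WellFoundedLT α]
    {f : ℕ → ℕ → α} (hf : ∀ k, Antitone fun n => f n k) (hf' : ∀ n, Antitone (f n)) :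
    ∃ N, ∀ n, N ≤ n → ∀ k, f n k = f N k := by
  have stabilizes (g : ℕ → α) (hg : Antitone g) : ∃ N, ∀ n, N ≤ n → g n = g N := by
    obtain ⟨_, ⟨N, rfl⟩, hN⟩ := WellFounded.has_min wellFounded_lt (Set.range g) ⟨g 0, 0, rfl⟩
    exact ⟨N, fun n hn => (hg hn).eq_of_not_lt (hN _ ⟨n, rfl⟩)⟩
  obtain ⟨D, hD⟩ := stabilizes (fun n => f n n) fun m n h => (hf n h).trans (hf' m h)
  choose c hc using fun k => stabilizes (fun n => f n k) (hf k)
  have diagonal {n k : ℕ} (hn : D ≤ n) (hk : D ≤ k) : f n k = f D D :=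
    le_antisymm ((hf k hn).trans (hf' D hk)) <| (hD _ (hn.trans (le_max_left n k))).ge.trans
      ((hf _ (le_max_left n k)).trans (hf' n (le_max_right n k)))
  refine ⟨max D ((Finset.range D).sup c), fun n hn k => ?_⟩
  rcases le_or_gt D k with hk | hk
  · rw [diagonal ((le_max_left _ _).trans hn) hk, diagonal (le_max_left _ _) hk]
  · have c_le : c k ≤ max D ((Finset.range D).sup c) :=
      (Finset.le_sup (Finset.mem_range.2 hk)).trans (le_max_right _ _)
    exact (hc k n (c_le.trans hn)).trans (hc k _ c_le).symm

variable {A T : Type*} [CommRing A] [AddCommGroup T] [Module A T] {x : A} {N M : Submodule A T}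

/-- The part of `x ^ k • N` killed by `x`. The layers with `k` varying play the role of an
associated graded object for the filtration of `N` by the kernels of the powers of `x`. -/
def torsionLayer (x : A) (N : Submodule A T) (k : ℕ) : Submodule A (Submodule.torsionBy A T x) :=
  (N.map (LinearMap.lsmul A T (x ^ k))).comap (Submodule.torsionBy A T x).subtype

lemma torsionLayer_mono {k : ℕ} (h : N ≤ M) : torsionLayer x N k ≤ torsionLayer x M k :=
  Submodule.comap_mono (Submodule.map_mono h)

lemma torsionLayer_antitone : Antitone (torsionLayer x N) := by
  refine fun k l hkl => Submodule.comap_mono ?_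
  rintro _ ⟨t, ht, rfl⟩
  refine ⟨x ^ (l - k) • t, N.smul_mem _ ht, ?_⟩
  rw [LinearMap.lsmul_apply, LinearMap.lsmul_apply, smul_smul, ← pow_add, Nat.add_sub_cancel' hkl]

lemma le_of_torsionLayer_le (hx : ∀ t : T, ∃ n, x ^ n • t = 0) (hNM : N ≤ M)
    (h : ∀ k, torsionLayer x M k ≤ torsionLayer x N k) : M ≤ N := by
  suffices mem_of_pow_smul_eq_zero : ∀ n, ∀ t ∈ M, x ^ n • t = 0 → t ∈ N from fun t ht =>
    (hx t).elim fun n => mem_of_pow_smul_eq_zero n t ht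
  intro n
  induction n with
  | zero =>
    intro t _ h_zero
    rw [pow_zero, one_smul] at h_zero
    exact h_zero ▸ N.zero_mem
  | succ n ih =>
    intro t ht h_zero
    have mem_torsionBy : x ^ n • t ∈ Submodule.torsionBy A T x := by
      rwa [Submodule.mem_torsionBy_iff, smul_smul, ← pow_succ']
    obtain ⟨s, hs, hst⟩ := h n (show ⟨x ^ n • t, mem_torsionBy⟩ ∈ _ from ⟨t, ht, rfl⟩)
    have sub_mem : t - s ∈ N := ih _ (M.sub_mem ht (hNM hs)) <| by
      rw [smul_sub, sub_eq_zero]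
      exact hst.symm
    exact (N.sub_mem_iff_left hs).1 sub_mem

/-- Melkersson's criterion for Artinianness. -/
theorem isArtinian_of_isArtinian_torsionBy (hx : ∀ t : T, ∃ n, x ^ n • t = 0)
    [IsArtinian A (Submodule.torsionBy A T x)] : IsArtinian A T := by
  rw [← monotone_stabilizes_iff_artinian]
  intro f
  obtain ⟨n, hn⟩ := exists_eventually_const_of_antitone (α := Submodule A _)
    (f := fun n k => torsionLayer x (OrderDual.ofDual (f n)) k)
    (fun _ _ _ h => torsionLayer_mono (f.monotone h)) (fun _ => torsionLayer_antitone)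
  exact ⟨n, fun m hnm => le_antisymm (f.monotone hnm)
    (le_of_torsionLayer_le hx (f.monotone hnm) fun k => (hn m hnm k).ge)⟩

end Melkersson

section ArtinianLocHAt

lemma isArtinian_of_maximalIdeal_le_annihilator {A N : Type*} [CommRing A] [IsLocalRing A]
    [AddCommGroup N] [Module A N] [Module.Finite A N]
    (h : IsLocalRing.maximalIdeal A ≤ Module.annihilator A N) : IsArtinian A N := by
  have isTorsionBySet : Module.IsTorsionBySet A N (IsLocalRing.maximalIdeal A) :=
    (Module.isTorsionBySet_iff_subset_annihilator ..).2 h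
  let := isTorsionBySet.module
  let := Ideal.Quotient.field (IsLocalRing.maximalIdeal A)
  have : IsSemisimpleModule A N := isTorsionBySet.isSemisimpleModule_iff.1 inferInstance
  infer_instance

lemma isArtinian_localizedModule_quotient {A : Type*} [CommRing A] (q : PrimeSpectrum A) :
    IsArtinian (Localization q.asIdeal.primeCompl)
      (LocalizedModule q.asIdeal.primeCompl (A ⧸ q.asIdeal)) := by
  apply isArtinian_of_maximalIdeal_le_annihilator
  rw [← Localization.AtPrime.map_eq_maximalIdeal, Ideal.map_le_iff_le_comap]
  refine fun a ha => Module.mem_annihilator.2 fun t => ?_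
  rw [algebraMap_smul]
  induction t using LocalizedModule.induction_on with
  | _ y s =>
    rw [LocalizedModule.smul'_mk, Module.mem_annihilator.1 (Ideal.annihilator_quotient.ge ha),
      LocalizedModule.zero_mk]

variable {I : Ideal R} {q P : PrimeSpectrum R} {i : ℕ}
  {X : Type} [AddCommGroup X] [Module R X]

lemma isArtinian_locHAt_zero_quotient (I : Ideal R) (q : PrimeSpectrum R) :
    IsArtinian (Localization q.asIdeal.primeCompl) (locHAt I q 0 (R ⧸ q.asIdeal)) :=
  have := isArtinian_localizedModule_quotient q
  isArtinian_of_injective (LocalizedModule.map q.asIdeal.primeCompl (locHZeroToModule I _))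
    (LocalizedModule.map_injective _ _ (locHZeroToModule_injective I))

lemma locHZeroToModule_bijective (hX : IsPowTorsion I X) :
    Function.Bijective (locHZeroToModule I X) :=
  ⟨locHZeroToModule_injective I, fun y => exists_locHZeroToModule_eq I (hX y)⟩

lemma nontrivial_locHAt_zero_quotient (h : I ≤ q.asIdeal) :
    Nontrivial (locHAt I q 0 (R ⧸ q.asIdeal)) := by
  rw [← Module.mem_support_iff, (LinearEquiv.ofBijective _
    (locHZeroToModule_bijective (isPowTorsion_quotient h))).support_eq, mem_support_quotient_iff]

lemma isArtinian_locHAt_succ_of_quotSMulTop {x : R} (hxI : x ∈ I) (hx : IsSMulRegular X x)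
    [IsArtinian (Localization q.asIdeal.primeCompl) (locHAt I q i (QuotSMulTop x X))] :
    IsArtinian (Localization q.asIdeal.primeCompl) (locHAt I q (i + 1) X) := by
  obtain ⟨δ, -, hδ⟩ := exists_connecting_locHAt (I := I) (q := q) (i := i)
    (f := LinearMap.lsmul R X x) hx (Submodule.mkQ_surjective _) (exact_lsmul_mkQ x X)
  have torsionBy_le_range : Submodule.torsionBy (Localization q.asIdeal.primeCompl)
      (locHAt I q (i + 1) X) (algebraMap R _ x) ≤ LinearMap.range δ := fun t ht =>
    (hδ t).1 <| by
      rw [locHAtMap_lsmul_apply, ← algebraMap_smul (Localization q.asIdeal.primeCompl) x t]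
      exact ht
  have := isArtinian_of_le torsionBy_le_range
  refine isArtinian_of_isArtinian_torsionBy (x := algebraMap R _ x) fun t => ?_
  obtain ⟨n, hn⟩ := isPowTorsion_locHAt t
  exact ⟨n, by rw [← map_pow, algebraMap_smul, hn _ (Ideal.pow_mem_pow hxI n)]⟩

variable [IsNoetherianRing R]

lemma isArtinian_locHAt_of_forall_quotient [Module.Finite R X]
    (h : ∀ P ≤ q, IsArtinian (Localization q.asIdeal.primeCompl) (locHAt I q i (R ⧸ P.asIdeal))) :
    IsArtinian (Localization q.asIdeal.primeCompl) (locHAt I q i X) := by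
  induction ‹Module.Finite R X› using
    IsNoetherianRing.induction_on_isQuotientEquivQuotientPrime R with
  | subsingleton N => infer_instance
  | quotient N P e =>
    have : IsArtinian (Localization q.asIdeal.primeCompl) (locHAt I q i (R ⧸ P.asIdeal)) := by
      by_cases hP : P ≤ q
      · exact h P hP
      · have := subsingleton_locHAt_quotient_of_not_le (I := I) (i := i) hP
        infer_instance
    exact isArtinian_of_injective _ (locHAtMap_equiv_injective e)
  | exact N₁ N₂ N₃ f g hf hg hfg h₁ h₃ =>
    exact isArtinian_of_range_eq_ker (locHAtMap I q i f) (locHAtMap I q i g)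
      (exact_locHAtMap hf hg hfg).linearMap_ker_eq.symm

theorem isArtinian_locHAt [Module.Finite R X] (hq : q.asIdeal ∈ I.minimalPrimes) :
    IsArtinian (Localization q.asIdeal.primeCompl) (locHAt I q i X) := by
  induction i generalizing X with
  | zero =>
    refine isArtinian_locHAt_of_forall_quotient fun P hP => ?_
    rcases hP.eq_or_lt with rfl | hlt
    · exact isArtinian_locHAt_zero_quotient I P
    · obtain ⟨x, hxI, hxP⟩ := exists_mem_notMem_of_lt hq hlt
      have := subsingleton_locHAt_zero (q := q) hxI (isSMulRegular_quotient hxP)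
      infer_instance
  | succ i ih =>
    refine isArtinian_locHAt_of_forall_quotient fun P hP => ?_
    rcases hP.eq_or_lt with rfl | hlt
    · have := (isPowTorsion_quotient hq.1.2).subsingleton_locHAt_succ (q := P) (i := i)
      infer_instance
    · obtain ⟨x, hxI, hxP⟩ := exists_mem_notMem_of_lt hq hlt
      have := ih (X := QuotSMulTop x (R ⧸ P.asIdeal))
      exact isArtinian_locHAt_succ_of_quotSMulTop hxI (isSMulRegular_quotient hxP)

end ArtinianLocHAt

/-! ### Nonvanishing at the codimension -/

section InfinitelyMany

lemma infinite_setOf_primeCodim_eq {A : Type*} [CommRing A] [IsNoetherianRing A]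
    {q P : PrimeSpectrum A} (hP : P ≤ q) {e : ℕ} (he : primeCodim q P = e + 2) :
    {Q | P < Q ∧ Q ≤ q ∧ primeCodim q Q = e + 1}.Infinite := by
  intro h_finite
  obtain ⟨Q₁, hPQ₁, hQ₁, codim_Q₁⟩ := exists_primeCodim_eq hP he
  obtain ⟨Q₂, hQ₁₂, hQ₂, codim_Q₂⟩ := exists_primeCodim_eq hQ₁ codim_Q₁
  obtain ⟨x, hxQ₂, hx⟩ : ∃ x ∈ Q₂.asIdeal,
      x ∉ ⋃ Q ∈ {Q | P < Q ∧ Q ≤ q ∧ primeCodim q Q = e + 1}, (Q.asIdeal : Set A) := by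
    by_contra! h_subset
    obtain ⟨Q, ⟨-, hQ, codim_Q⟩, hQ₂Q⟩ := (Ideal.subset_union_prime_finite h_finite Q₂ Q₂
      fun Q _ _ _ => Q.isPrime).1 h_subset
    have := primeCodim_le_primeCodim (show Q₂ ≤ Q from hQ₂Q) hQ
    omega
  obtain ⟨Q, hxQ, hPQ, hQQ₂⟩ := PrimeSpectrum.exist_mem_one_of_mem_two hPQ₁ hQ₁₂ hxQ₂
  have := primeCodim_lt_primeCodim hQQ₂ hQ₂
  have := primeCodim_lt_primeCodim hPQ (hQQ₂.le.trans hQ₂)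
  exact hx (Set.mem_biUnion ⟨hPQ, hQQ₂.le.trans hQ₂, by omega⟩ hxQ)

lemma exists_eq_top_of_isArtinian {R A T ι : Type*} [CommRing R] [Ring A] [AddCommGroup T]
    [Module R T] [Module A T] [IsArtinian A T] [Infinite ι] {Q : ι → Ideal R}
    [∀ i, (Q i).IsPrime] (hQ : ∀ i j, Q i ≤ Q j → i = j) {K : ι → Submodule A T}
    (smul_mem : ∀ i, ∀ a ∈ Q i, ∀ t : T, a • t ∈ K i)
    (smul_add_mem : ∀ i, ∀ a ∉ Q i, ∀ t : T, ∃ s : T, t - a • s ∈ K i) : ∃ i, K i = ⊤ := by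
  obtain ⟨_, ⟨S, rfl⟩, hS⟩ := IsArtinian.set_has_minimal
    (Set.range fun S : Finset ι => S.inf K) ⟨_, ∅, rfl⟩
  obtain ⟨j, hj⟩ := Infinite.exists_notMem_finset S
  have inf_le : S.inf K ≤ K j := by
    classical
    rw [← inf_eq_right]
    exact (inf_le_right.eq_of_not_lt (hS _ ⟨insert j S, Finset.inf_insert⟩))
  obtain ⟨a, haS, haj⟩ : ∃ a ∈ S.inf Q, a ∉ Q j := by
    refine SetLike.not_le_iff_exists.1 fun h_le => ?_
    obtain ⟨i, hi, hij⟩ := (Ideal.IsPrime.inf_le' inferInstance).1 h_le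
    exact hj (hQ i j hij ▸ hi)
  refine ⟨j, eq_top_iff.2 fun t _ => ?_⟩
  obtain ⟨s, hs⟩ := smul_add_mem j a haj t
  have smul_mem_inf : a • s ∈ S.inf K :=
    (Submodule.mem_finsetInf ..).2 fun i hi => smul_mem i a ((Finset.inf_le hi : _ ≤ Q i) haS) s
  exact ((K j).sub_mem_iff_left (inf_le smul_mem_inf)).1 hs

end InfinitelyMany

section Nonvanishing

variable [IsNoetherianRing R] {I : Ideal R} {q P Q : PrimeSpectrum R} {d : ℕ}
  {X Y : Type} [AddCommGroup X] [Module R X] [Module.Finite R X] [AddCommGroup Y] [Module R Y]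

lemma locHAtMap_surjective_of_smul_mem_range [Module.Finite R Y]
    (hq : q.asIdeal ∈ I.minimalPrimes) {f : X →ₗ[R] Y}
    (hX : ∀ Q ∈ Module.support R X, Q ≤ q → primeCodim q Q ≤ d)
    (hP : primeCodim q P ≤ d) (hY : P.asIdeal ≤ Module.annihilator R Y) {a : R}
    (ha : a ∉ P.asIdeal) (hf : ∀ y, a • y ∈ LinearMap.range f) :
    Function.Surjective (locHAtMap I q d f) := by
  have : Subsingleton (locHAt I q (d + 1) (LinearMap.ker f)) :=
    subsingleton_locHAt_of_primeCodim_lt hq fun Q hQ hQq => Nat.lt_succ_of_le <|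
      hX Q (Module.support_subset_of_injective _ (LinearMap.ker f).injective_subtype hQ) hQq
  have : Subsingleton (locHAt I q d (Y ⧸ LinearMap.range f)) := by
    refine subsingleton_locHAt_of_primeCodim_lt hq fun Q hQ hQq => ?_
    rw [Module.mem_support_iff_of_finite] at hQ
    have annihilator_le := (LinearMap.annihilator_le_of_surjective _
      (LinearMap.range f).mkQ_surjective).trans hQ
    have a_mem : a ∈ Q.asIdeal := hQ <| Module.mem_annihilator.2 fun y => by
      obtain ⟨y, rfl⟩ := (LinearMap.range f).mkQ_surjective y
      rw [← map_smul, Submodule.mkQ_apply, Submodule.Quotient.mk_eq_zero]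
      exact hf y
    have hPQ : P < Q := lt_of_le_of_ne (hY.trans annihilator_le) fun h => ha (h ▸ a_mem)
    exact (primeCodim_lt_primeCodim hPQ hQq).trans_le hP
  exact locHAtMap_surjective f

lemma locHAtMap_surjective_of_ne_zero (hq : q.asIdeal ∈ I.minimalPrimes)
    (hX : ∀ Q ∈ Module.support R X, Q ≤ q → primeCodim q Q ≤ d) (hP : primeCodim q P ≤ d)
    {g : X →ₗ[R] R ⧸ P.asIdeal} (hg : g ≠ 0) : Function.Surjective (locHAtMap I q d g) := by
  obtain ⟨x, hx⟩ := DFunLike.ne_iff.1 hg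
  obtain ⟨a, ha⟩ := Ideal.Quotient.mk_surjective (g x)
  refine locHAtMap_surjective_of_smul_mem_range hq hX hP (Ideal.annihilator_quotient).ge
    (a := a) (fun h => hx ?_) fun y => ?_
  · rw [← ha, Ideal.Quotient.eq_zero_iff_mem.2 h, LinearMap.zero_apply]
  · obtain ⟨b, rfl⟩ := Ideal.Quotient.mk_surjective y
    refine ⟨b • x, ?_⟩
    rw [map_smul, ← ha, Algebra.smul_def, Algebra.smul_def, Ideal.Quotient.algebraMap_eq, mul_comm]

lemma subsingleton_locHAt_submodule_quotient (hq : q.asIdeal ∈ I.minimalPrimes)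
    (hP : primeCodim q P ≤ d) [Subsingleton (locHAt I q d (R ⧸ P.asIdeal))]
    (N : Submodule R (R ⧸ P.asIdeal)) : Subsingleton (locHAt I q d N) := by
  rcases eq_or_ne N ⊥ with rfl | hN
  · infer_instance
  · obtain ⟨y, hyN, hy⟩ := Submodule.exists_mem_ne_zero_of_ne_bot hN
    obtain ⟨a, rfl⟩ := Ideal.Quotient.mk_surjective y
    have ha : a ∉ P.asIdeal := fun h => hy (Ideal.Quotient.eq_zero_iff_mem.2 h)
    have smul_mem (z : R ⧸ P.asIdeal) : a • z ∈ N := by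
      obtain ⟨b, rfl⟩ := Ideal.Quotient.mk_surjective z
      rw [Algebra.smul_def, mul_comm]
      exact N.smul_mem b hyN
    let f : R ⧸ P.asIdeal →ₗ[R] N := (LinearMap.lsmul R _ a).codRestrict N smul_mem
    refine (locHAtMap_surjective_of_smul_mem_range hq (f := f) (fun Q hQ hQq =>
      (primeCodim_le_primeCodim (mem_support_quotient_iff.1 hQ) hQq).trans hP) hP ?_ ha
      fun z => ⟨z, rfl⟩).subsingleton
    exact Ideal.annihilator_quotient.ge.trans
      (LinearMap.annihilator_le_of_injective _ N.injective_subtype)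

lemma locHAtMap_factor_surjective (hq : q.asIdeal ∈ I.minimalPrimes) (hPQ : P ≤ Q)
    (hP : primeCodim q P ≤ d + 1) [Subsingleton (locHAt I q (d + 1) (R ⧸ P.asIdeal))] :
    Function.Surjective (locHAtMap I q d (Submodule.factor hPQ)) := by
  have := subsingleton_locHAt_submodule_quotient hq hP (LinearMap.ker (Submodule.factor hPQ))
  have : Subsingleton ((R ⧸ Q.asIdeal) ⧸ LinearMap.range (Submodule.factor hPQ)) := by
    rw [Submodule.Quotient.subsingleton_iff, LinearMap.range_eq_top]
    exact Submodule.factor_surjective hPQ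
  exact locHAtMap_surjective _

lemma exists_smul_locHAt_quotient_eq (hq : q.asIdeal ∈ I.minimalPrimes)
    (hP : primeCodim q P ≤ d) {a : R} (ha : a ∉ P.asIdeal) (t : locHAt I q d (R ⧸ P.asIdeal)) :
    ∃ s, a • s = t := by
  have lsmul_ne_zero : LinearMap.lsmul R (R ⧸ P.asIdeal) a ≠ 0 := fun h =>
    ha (Ideal.annihilator_quotient.le (Module.mem_annihilator.2 (LinearMap.congr_fun h)))
  obtain ⟨s, hs⟩ := locHAtMap_surjective_of_ne_zero hq (fun Q hQ hQq =>
    (primeCodim_le_primeCodim (mem_support_quotient_iff.1 hQ) hQq).trans hP) hP lsmul_ne_zero t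
  exact ⟨s, (locHAtMap_lsmul_apply a s).symm.trans hs⟩

/- Otherwise the Artinian module `F^(e+1)(R/P)` would surject onto the nonzero `F^(e+1)(R/Q)` for
infinitely many primes `Q`. -/
lemma not_subsingleton_locHAt_of_forall_nontrivial (hq : q.asIdeal ∈ I.minimalPrimes)
    (hP : P ≤ q) {e : ℕ} (he : primeCodim q P = e + 2)
    (hQ : ∀ Q ≤ q, primeCodim q Q = e + 1 → Nontrivial (locHAt I q (e + 1) (R ⧸ Q.asIdeal))) :
    ¬Subsingleton (locHAt I q (e + 2) (R ⧸ P.asIdeal)) := by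
  intro _
  let ι := {Q | P < Q ∧ Q ≤ q ∧ primeCodim q Q = e + 1}
  have : Infinite ι := (infinite_setOf_primeCodim_eq hP he).to_subtype
  have (Q : ι) : Q.1.asIdeal.IsPrime := Q.1.isPrime
  let φ (Q : ι) := locHAtMap I q (e + 1) (Submodule.factor Q.2.1.le)
  have φ_surjective (Q : ι) : Function.Surjective (φ Q) :=
    locHAtMap_factor_surjective hq Q.2.1.le he.le
  have eq_of_le (Q Q' : ι) (h : Q.1.asIdeal ≤ Q'.1.asIdeal) : Q = Q' :=
    Subtype.ext <| (show Q.1 ≤ Q' from h).eq_of_not_lt fun h_lt =>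
      (primeCodim_lt_primeCodim h_lt Q'.2.2.1).ne (Q'.2.2.2.trans Q.2.2.2.symm)
  have smul_mem_ker (Q : ι) (a : R) (ha : a ∈ Q.1.asIdeal) (t) : a • t ∈ LinearMap.ker (φ Q) := by
    rw [LinearMap.mem_ker, LinearMap.map_smul_of_tower, smul_locHAt_quotient_eq_zero ha]
  have sub_smul_mem_ker (Q : ι) (a : R) (ha : a ∉ Q.1.asIdeal) (t) :
      ∃ s, t - a • s ∈ LinearMap.ker (φ Q) := by
    obtain ⟨u, hu⟩ := exists_smul_locHAt_quotient_eq hq Q.2.2.2.le ha (φ Q t)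
    obtain ⟨s, rfl⟩ := φ_surjective Q u
    exact ⟨s, by rw [LinearMap.mem_ker, map_sub, LinearMap.map_smul_of_tower, hu, sub_self]⟩
  have := isArtinian_locHAt (i := e + 1) (X := R ⧸ P.asIdeal) hq
  obtain ⟨Q, ker_eq_top⟩ := exists_eq_top_of_isArtinian eq_of_le smul_mem_ker sub_smul_mem_ker
  have := hQ Q Q.2.2.1 Q.2.2.2
  obtain ⟨t, ht⟩ := exists_ne (0 : locHAt I q (e + 1) (R ⧸ Q.1.asIdeal))
  obtain ⟨s, rfl⟩ := φ_surjective Q t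
  exact ht (LinearMap.mem_ker.1 (ker_eq_top ▸ Submodule.mem_top))

theorem nontrivial_locHAt_quotient (hq : q.asIdeal ∈ I.minimalPrimes) (hP : P ≤ q)
    (hd : primeCodim q P = d) : Nontrivial (locHAt I q d (R ⧸ P.asIdeal)) := by
  induction d generalizing P with
  | zero =>
    obtain rfl := (primeCodim_eq_zero_iff hP).1 hd
    exact nontrivial_locHAt_zero_quotient hq.1.2
  | succ d ih =>
    rw [← not_subsingleton_iff_nontrivial]
    rcases d with _ | e
    · intro _
      obtain ⟨x, hxI, hxP⟩ := exists_mem_notMem_of_lt hq (hP.lt_of_ne fun h => by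
        rw [(primeCodim_eq_zero_iff hP).2 h] at hd
        omega)
      have := subsingleton_locHAt_zero (q := q) hxI (isSMulRegular_quotient hxP)
      have := (locHAtMap_factor_surjective hq hP hd.le).subsingleton
      have := nontrivial_locHAt_zero_quotient hq.1.2
      exact not_subsingleton (locHAt I q 0 (R ⧸ q.asIdeal)) ‹_›
    · exact not_subsingleton_locHAt_of_forall_nontrivial hq hP hd fun Q hQ hQd => ih hQ hQd

end Nonvanishing

section SupportBound

variable [IsNoetherianRing R] {I : Ideal R} {q P : PrimeSpectrum R}
  {X : Type} [AddCommGroup X] [Module R X] [Module.Finite R X]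

lemma nontrivial_locHAt_of_mem_support {d : ℕ} (hq : q.asIdeal ∈ I.minimalPrimes)
    (hX : ∀ Q ∈ Module.support R X, Q ≤ q → primeCodim q Q ≤ d)
    (hP : P ∈ Module.support R X) (hPq : P ≤ q) (hd : primeCodim q P = d) :
    Nontrivial (locHAt I q d X) := by
  obtain ⟨g, hg⟩ : ∃ g : X →ₗ[R] R ⧸ P.asIdeal, g ≠ 0 := by
    by_contra! h_zero
    obtain ⟨r, hrX, hr⟩ := IsSMulRegular.subsingleton_linearMap_iff.1 (subsingleton_of_forall_eq
      (0 : X →ₗ[R] R ⧸ P.asIdeal) h_zero)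
    have r_mem := Module.mem_support_iff_of_finite.1 hP hrX
    exact one_ne_zero (hr.right_eq_zero_of_smul (x := (1 : R ⧸ P.asIdeal))
      (Module.mem_annihilator.1 (Ideal.annihilator_quotient.ge r_mem) 1))
  have := nontrivial_locHAt_quotient hq hPq hd
  exact (locHAtMap_surjective_of_ne_zero hq hX hd.le hg).nontrivial

lemma primeCodim_le_of_subsingleton_locHAt {c : ℕ} (hq : q.asIdeal ∈ I.minimalPrimes)
    (hc : ∀ i, c < i → Subsingleton (locHAt I q i X)) (hP : P ∈ Module.support R X)
    (hPq : P ≤ q) : primeCodim q P ≤ c := by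
  let codims := primeCodim q '' (Module.support R X ∩ Set.Iic q)
  have bddAbove_codims : BddAbove codims :=
    (bddAbove_primeCodim q).mono (Set.image_mono Set.inter_subset_right)
  obtain ⟨Q, ⟨hQX, hQ⟩, codim_Q⟩ :=
    Nat.sSup_mem (s := codims) ⟨_, P, ⟨hP, hPq⟩, rfl⟩ bddAbove_codims
  have le_codim_Q (Q' : PrimeSpectrum R) (hQ' : Q' ∈ Module.support R X) (hQ'q : Q' ≤ q) :
      primeCodim q Q' ≤ sSup codims := le_csSup bddAbove_codims ⟨Q', ⟨hQ', hQ'q⟩, rfl⟩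
  have := nontrivial_locHAt_of_mem_support hq le_codim_Q hQX hQ codim_Q
  refine (le_codim_Q P hP hPq).trans (le_of_not_gt fun h_lt => ?_)
  exact not_subsingleton (locHAt I q (sSup codims) X) (hc _ h_lt)

end SupportBound

/-! ### Associated primes and quotients by powers of an element -/

section AssociatedPrimes

variable {A : Type*} [CommRing A] [IsNoetherianRing A] {X : Type*} [AddCommGroup X] [Module A X]

lemma exists_forall_mem_iff_smul_eq_zero {P : Ideal A}
    (hP : P ∈ associatedPrimes A X) : ∃ z : X, ∀ a, a ∈ P ↔ a • z = 0 := by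
  rw [AssociatedPrimes.mem_iff, isAssociatedPrime_iff] at hP
  obtain ⟨-, z, rfl⟩ := hP
  exact ⟨z, fun a => by rw [Submodule.mem_colon_singleton, Submodule.mem_bot]⟩

variable [Module.Finite A X]

lemma exists_mem_associatedPrimes_le {Q : PrimeSpectrum A} (hQ : Q ∈ Module.support A X) :
    ∃ P ∈ associatedPrimes A X, P ≤ Q.asIdeal := by
  obtain ⟨P, hP, hPQ⟩ := Ideal.exists_minimalPrimes_le (Module.mem_support_iff_of_finite.1 hQ)
  exact ⟨P, Module.associatedPrimes.minimalPrimes_annihilator_subset_associatedPrimes A X hP, hPQ⟩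

lemma exists_mem_associatedPrimes_le_of_mem_support_ker {x : A} {Q : PrimeSpectrum A}
    (hQ : Q ∈ Module.support A (LinearMap.ker (LinearMap.lsmul A X x))) :
    ∃ P ∈ associatedPrimes A X, P ≤ Q.asIdeal ∧ x ∈ P := by
  obtain ⟨P, hP, hPQ⟩ := exists_mem_associatedPrimes_le hQ
  refine ⟨P, associatedPrimes.subset_of_injective (Submodule.injective_subtype _) hP, hPQ, ?_⟩
  refine hP.annihilator_le ?_
  rw [Submodule.annihilator_top]
  exact Module.mem_annihilator.2 fun y => Subtype.ext (LinearMap.mem_ker.1 y.2)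

lemma exists_smul_eq_of_smul_eq_pow_smul (x : A) (z : X) :
    ∃ n : ℕ, ∀ (a : A) (y : X), a • z = x ^ (n + 1) • y →
      ∃ b : A, a • z = (x * b) • z := by
  obtain ⟨m, hm, comap_le⟩ := exists_pow_smul_top_comap_le (Ideal.span {x}) (Submodule.span A {z}) 1
  obtain ⟨n, rfl⟩ := Nat.exists_eq_add_of_le' hm
  refine ⟨n, fun a y hay => ?_⟩
  rw [Ideal.span_singleton_pow, Submodule.ideal_span_singleton_smul, pow_one,
    Submodule.ideal_span_singleton_smul] at comap_le
  have mem_span : a • z ∈ Submodule.span A {z} := Submodule.mem_span_singleton.2 ⟨a, rfl⟩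
  obtain ⟨⟨_, hs⟩, -, h_eq⟩ := comap_le
    (show ⟨a • z, mem_span⟩ ∈ _ from (Submodule.mem_smul_pointwise_iff_exists ..).2
      ⟨y, Submodule.mem_top, hay.symm⟩)
  obtain ⟨b, rfl⟩ := Submodule.mem_span_singleton.1 hs
  exact ⟨b, (congrArg Subtype.val h_eq).symm.trans (smul_smul x b z)⟩

/- If `P` is the annihilator of `z`, then by Artin–Rees the annihilator of the image of `z` in
`X / x ^ (n + 1) • X` lies between `P + (x ^ (n + 1))` and `P + (x)` for some `n`. -/
lemma exists_mem_associatedPrimes_quotSMulTop_pow {P P' : Ideal A} {x : A}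
    (hP : P ∈ associatedPrimes A X) (hP' : P' ∈ (P ⊔ Ideal.span {x}).minimalPrimes) :
    ∃ n, P' ∈ associatedPrimes A (QuotSMulTop (x ^ (n + 1)) X) := by
  obtain ⟨z, hz⟩ := exists_forall_mem_iff_smul_eq_zero hP
  obtain ⟨n, hn⟩ := exists_smul_eq_of_smul_eq_pow_smul x z
  let N : Submodule A (QuotSMulTop (x ^ (n + 1)) X) := Submodule.span A {Submodule.Quotient.mk z}
  have mem_annihilator_iff (a : A) : a ∈ Module.annihilator A N ↔ ∃ y, x ^ (n + 1) • y = a • z := by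
    change a ∈ N.annihilator ↔ _
    rw [Submodule.mem_annihilator_span_singleton, ← Submodule.Quotient.mk_smul,
      Submodule.Quotient.mk_eq_zero, Submodule.mem_smul_pointwise_iff_exists]
    simp only [Submodule.mem_top, true_and]
  have annihilator_le : Module.annihilator A N ≤ P ⊔ Ideal.span {x} := by
    intro a ha
    obtain ⟨y, hy⟩ := (mem_annihilator_iff a).1 ha
    obtain ⟨b, hb⟩ := hn a y hy.symm
    rw [← sub_add_cancel a (x * b)]
    exact Submodule.add_mem_sup ((hz _).2 (by rw [sub_smul, hb, sub_self]))
      (Ideal.mem_span_singleton.2 (dvd_mul_right x b))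
  have le_of_prime_le {Q : Ideal A} (hQ : Q.IsPrime) (hNQ : Module.annihilator A N ≤ Q) :
      P ⊔ Ideal.span {x} ≤ Q := by
    refine sup_le (fun a ha => hNQ ((mem_annihilator_iff a).2 ⟨0, ?_⟩)) ?_
    · rw [smul_zero, (hz a).1 ha]
    · rw [Ideal.span_singleton_le_iff_mem]
      exact hQ.mem_of_pow_mem _ (hNQ ((mem_annihilator_iff _).2 ⟨z, rfl⟩))
  exact ⟨n, associatedPrimes.subset_of_injective N.injective_subtype
    (Module.associatedPrimes.minimalPrimes_annihilator_subset_associatedPrimes A N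
      ⟨⟨hP'.1.1, annihilator_le.trans hP'.1.2⟩, fun Q ⟨hQ, hNQ⟩ hQP' =>
        hP'.2 ⟨hQ, le_of_prime_le hQ hNQ⟩ hQP'⟩)⟩

end AssociatedPrimes

/-! ### Local cohomology killed by a power of the ideal -/

section AnnihilatedByPow

variable {A : Type*} [CommRing A] {I : Ideal A} {X Y Z : Type*} [AddCommGroup X] [Module A X]
  [AddCommGroup Y] [Module A Y] [AddCommGroup Z] [Module A Z]

/-- A power of `I` kills the whole module `X`. This consequence of finite generation of an
`I`-torsion module is what survives localization and passage to subquotients and extensions. -/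
def IsAnnihilatedByPow (I : Ideal A) (X : Type*) [AddCommGroup X] [Module A X] : Prop :=
  ∃ n : ℕ, I ^ n ≤ Module.annihilator A X

namespace IsAnnihilatedByPow

lemma of_surjective (h : IsAnnihilatedByPow I X) (f : X →ₗ[A] Y) (hf : Function.Surjective f) :
    IsAnnihilatedByPow I Y :=
  h.imp fun _ hn => hn.trans (f.annihilator_le_of_surjective hf)

lemma of_exact {f : X →ₗ[A] Y} {g : Y →ₗ[A] Z} (hfg : Function.Exact f g)
    (hX : IsAnnihilatedByPow I X) (hZ : IsAnnihilatedByPow I Z) : IsAnnihilatedByPow I Y := by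
  obtain ⟨m, hm⟩ := hX
  obtain ⟨n, hn⟩ := hZ
  refine ⟨m + n, (pow_add I m n).trans_le (Ideal.mul_le.2 fun a ha b hb => ?_)⟩
  refine Module.mem_annihilator.2 fun y => ?_
  obtain ⟨x, hx⟩ := (hfg (b • y)).1 (by rw [map_smul, Module.mem_annihilator.1 (hn hb)])
  rw [mul_smul, ← hx, ← map_smul, Module.mem_annihilator.1 (hm ha), map_zero]

lemma localizedModule (h : IsAnnihilatedByPow I X) (S : Submonoid A) :
    IsAnnihilatedByPow I (LocalizedModule S X) := by
  refine h.imp fun n hn a ha => Module.mem_annihilator.2 fun t => ?_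
  induction t using LocalizedModule.induction_on with
  | _ x s =>
    rw [LocalizedModule.smul'_mk, Module.mem_annihilator.1 (hn ha), LocalizedModule.zero_mk]

end IsAnnihilatedByPow

end AnnihilatedByPow

section LocHAtBound

variable {I : Ideal R} {q P : PrimeSpectrum R} {i : ℕ} {X : Type} [AddCommGroup X] [Module R X]

lemma isAnnihilatedByPow_locHAt [Module.Finite R (locH I i X)] :
    IsAnnihilatedByPow I (locHAt I q i X) :=
  IsAnnihilatedByPow.localizedModule (isPowTorsion_locH I i).exists_pow_le_annihilator _

variable [IsNoetherianRing R] [Module.Finite R X]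

lemma isAnnihilatedByPow_locHAt_zero : IsAnnihilatedByPow I (locHAt I q 0 X) :=
  have := Module.Finite.of_injective (locHZeroToModule I X) (locHZeroToModule_injective I)
  isAnnihilatedByPow_locHAt

lemma subsingleton_locHAt_succ_ker_lsmul (hq : q.asIdeal ∈ I.minimalPrimes) {x : R}
    (hx : ∀ P ∈ associatedPrimes R X, P < q.asIdeal → x ∉ P) :
    Subsingleton (locHAt I q (i + 1) (LinearMap.ker (LinearMap.lsmul R X x))) := by
  refine subsingleton_locHAt_of_primeCodim_lt hq fun Q hQ hQq => ?_
  obtain ⟨P, hP, hPQ, hxP⟩ := exists_mem_associatedPrimes_le_of_mem_support_ker hQ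
  obtain rfl : Q = q := hQq.antisymm <| by
    by_contra hqQ
    exact hx P hP (hPQ.trans_lt (lt_of_le_not_ge hQq hqQ)) hxP
  rw [primeCodim_self]
  exact i.succ_pos

open scoped Pointwise in
lemma isAnnihilatedByPow_locHAt_quotSMulTop (hq : q.asIdeal ∈ I.minimalPrimes) {x : R}
    (hx : ∀ P ∈ associatedPrimes R X, P < q.asIdeal → x ∉ P)
    (h : IsAnnihilatedByPow I (locHAt I q i X))
    (h_succ : IsAnnihilatedByPow I (locHAt I q (i + 1) X)) :
    IsAnnihilatedByPow I (locHAt I q i (QuotSMulTop x X)) := by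
  let f := (LinearMap.lsmul R X x).rangeRestrict
  have : Subsingleton (locHAt I q (i + 1 + 1) (LinearMap.ker f)) := by
    rw [LinearMap.ker_rangeRestrict]
    exact subsingleton_locHAt_succ_ker_lsmul hq hx
  have : Subsingleton (LinearMap.range (LinearMap.lsmul R X x) ⧸ LinearMap.range f) := by
    rw [Submodule.Quotient.subsingleton_iff, LinearMap.range_rangeRestrict]
  have annihilated_range := h_succ.of_surjective ((locHAtMap I q (i + 1) f).restrictScalars R)
    (locHAtMap_surjective f)
  obtain ⟨δ, hδ, -⟩ := exists_connecting_locHAt (I := I) (q := q) (i := i)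
    (LinearMap.range (LinearMap.lsmul R X x)).injective_subtype
    (Submodule.mkQ_surjective (x • (⊤ : Submodule R X)))
    (by rw [LinearMap.exact_iff, Submodule.range_subtype, (exact_lsmul_mkQ x X).linearMap_ker_eq])
  exact h.of_exact (f := (locHAtMap I q i _).restrictScalars R) (g := δ.restrictScalars R) hδ
    annihilated_range

lemma not_isAnnihilatedByPow_locHAt_quotient (hq : q.asIdeal ∈ I.minimalPrimes) (hP : P < q) :
    ¬IsAnnihilatedByPow I (locHAt I q (primeCodim q P) (R ⧸ P.asIdeal)) := by
  rintro ⟨n, hn⟩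
  obtain ⟨a, haI, haP⟩ := exists_mem_notMem_of_lt hq hP
  have := nontrivial_locHAt_quotient hq hP.le rfl
  obtain ⟨t, ht⟩ := exists_ne (0 : locHAt I q (primeCodim q P) (R ⧸ P.asIdeal))
  obtain ⟨s, rfl⟩ := exists_smul_locHAt_quotient_eq hq le_rfl
    (fun h => haP (P.isPrime.mem_of_pow_mem n h)) t
  exact ht (Module.mem_annihilator.1 (hn (Ideal.pow_mem_pow haI n)) s)

lemma primeCodim_ne_one (hq : q.asIdeal ∈ I.minimalPrimes) (hPq : P < q)
    (hP : P.asIdeal ∈ associatedPrimes R X) (h : IsAnnihilatedByPow I (locHAt I q 1 X)) :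
    primeCodim q P ≠ 1 := by
  intro codim_eq_one
  apply not_isAnnihilatedByPow_locHAt_quotient hq hPq
  obtain ⟨-, f, hf⟩ := (isAssociatedPrime_iff_exists_injective_linearMap _ _).1 hP
  obtain ⟨δ, -, hδ⟩ := exists_connecting_locHAt (I := I) (q := q) (i := 0) hf
    (LinearMap.range f).mkQ_surjective (LinearMap.exact_map_mkQ_range f)
  rw [codim_eq_one]
  exact isAnnihilatedByPow_locHAt_zero.of_exact (f := δ.restrictScalars R)
    (g := (locHAtMap I q 1 f).restrictScalars R) hδ h

end LocHAtBound

section AssociatedPrimeCodim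

variable [IsNoetherianRing R] {I : Ideal R} {q P : PrimeSpectrum R}
  {X : Type} [AddCommGroup X] [Module R X] [Module.Finite R X]

lemma exists_mem_forall_associatedPrimes_notMem {A : Type*} [CommRing A] [IsNoetherianRing A]
    {X : Type*} [AddCommGroup X] [Module A X] [Module.Finite A X] {J q : Ideal A}
    (hJ : ∀ P ∈ associatedPrimes A X, P < q → ¬J ≤ P) :
    ∃ x ∈ J, ∀ P ∈ associatedPrimes A X, P < q → x ∉ P := by
  by_contra! h
  have subset_union : (J : Set A) ⊆ ⋃ P ∈ {P ∈ associatedPrimes A X | P < q}, (id P : Ideal A) :=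
    fun x hx => by simpa [and_assoc] using h x hx
  obtain ⟨P, hP, hJP⟩ := (Ideal.subset_union_prime_finite
    ((associatedPrimes.finite A X).subset (Set.sep_subset _ _)) ⊥ ⊥
    fun P hP _ _ => hP.1.isPrime).1 subset_union
  exact hJ P hP.1 hP.2 hJP

lemma exists_minimalPrimes_sup_span_lt {x : R} (hx : x ∈ q.asIdeal) (hxP : x ∉ P.asIdeal)
    {P₁ : PrimeSpectrum R} (hP₁ : P < P₁) (hP₁q : P₁ < q) :
    ∃ Q : PrimeSpectrum R, Q.asIdeal ∈ (P.asIdeal ⊔ Ideal.span {x}).minimalPrimes ∧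
      P < Q ∧ Q < q := by
  obtain ⟨P₂, hxP₂, hP₂, hP₂q⟩ := PrimeSpectrum.exist_mem_one_of_mem_two hP₁ hP₁q hx
  obtain ⟨Q, hQ, hQP₂⟩ := Ideal.exists_minimalPrimes_le
    (sup_le hP₂.le ((Ideal.span_singleton_le_iff_mem P₂.asIdeal).2 hxP₂))
  refine ⟨⟨Q, hQ.1.1⟩, hQ, lt_of_le_of_ne (le_sup_left.trans hQ.1.2) fun h_eq => hxP ?_,
    lt_of_le_of_lt hQP₂ hP₂q⟩
  rw [h_eq]
  exact hQ.1.2 (Ideal.mem_sup_right (Ideal.mem_span_singleton_self x))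

/- By Krull's principal ideal theorem and Artin–Rees, some `x ∈ I` makes `X / x ^ (n + 1) • X` have
an associated prime of smaller positive codimension, so that induction reduces to codimension
one. -/
theorem exists_not_isAnnihilatedByPow_locHAt (hq : q.asIdeal ∈ I.minimalPrimes)
    (hP : P.asIdeal ∈ associatedPrimes R X) (hPq : P < q) :
    ∃ i ≤ primeCodim q P, ¬IsAnnihilatedByPow I (locHAt I q i X) := by
  induction h_codim : primeCodim q P using Nat.strong_induction_on generalizing X P with
  | _ d ih =>
    subst h_codim
    by_contra! h
    by_cases h_between : ∃ P₁, P < P₁ ∧ P₁ < q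
    · obtain ⟨P₁, hP₁, hP₁q⟩ := h_between
      obtain ⟨x, hxI, hx⟩ := exists_mem_forall_associatedPrimes_notMem (X := X) (q := q.asIdeal)
        fun Q hQ hQq hIQ => hQq.not_ge (hq.2 ⟨hQ.isPrime, hIQ⟩ hQq.le)
      obtain ⟨Q, hQ, hPQ, hQq⟩ :=
        exists_minimalPrimes_sup_span_lt (hq.1.2 hxI) (hx _ hP hPq) hP₁ hP₁q
      obtain ⟨n, hQn⟩ := exists_mem_associatedPrimes_quotSMulTop_pow hP hQ
      have codim_lt := primeCodim_lt_primeCodim hPQ hQq.le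
      obtain ⟨i, hi, h_not⟩ := ih _ codim_lt hQn hQq rfl
      exact h_not (isAnnihilatedByPow_locHAt_quotSMulTop hq
        (fun P' hP' hP'q hxn => hx P' hP' hP'q (hP'.isPrime.mem_of_pow_mem _ hxn))
        (h i (by omega)) (h (i + 1) (by omega)))
    · obtain ⟨d, hd⟩ := Nat.exists_eq_succ_of_ne_zero
        (mt (primeCodim_eq_zero_iff hPq.le).1 hPq.ne)
      obtain ⟨Q, hPQ, hQq, codim_Q⟩ := exists_primeCodim_eq hPq.le hd
      obtain rfl : Q = q := by
        by_contra h_ne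
        exact h_between ⟨Q, hPQ, lt_of_le_of_ne hQq h_ne⟩
      obtain rfl : 0 = d := (primeCodim_self Q).symm.trans codim_Q
      exact primeCodim_ne_one hq hPq hP (h 1 hd.ge) hd

end AssociatedPrimeCodim

/-! ### Regular sequences and the Cohen–Macaulay property -/

section CohenMacaulay

open IsLocalRing RingTheory.Sequence

lemma subsingleton_extH_iff {A : Type} [CommRing A] (J : Ideal A) (i : ℕ) (N : Type)
    [AddCommGroup N] [Module A N] : Subsingleton (extH J i N) ↔
      Subsingleton (Abelian.Ext (ModuleCat.of A (A ⧸ J)) (ModuleCat.of A N) i) :=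
  (extLinearEquiv A _ _ i).toEquiv.subsingleton_congr

lemma support_quotient_eq_zeroLocus {A : Type*} [CommRing A] (J : Ideal A) :
    Module.support A (A ⧸ J) = PrimeSpectrum.zeroLocus J :=
  Set.ext fun _ => mem_support_quotient_iff

variable {A : Type} [CommRing A] [IsLocalRing A] {N : Type} [AddCommGroup N] [Module A N]
  [Module.Finite A N]

lemma maximalIdeal_smul_top_lt_top [Nontrivial N] :
    maximalIdeal A • (⊤ : Submodule A N) < ⊤ :=
  lt_top_iff_ne_top.2
    (Submodule.top_ne_ideal_smul_of_le_jacobson_annihilator (maximalIdeal_le_jacobson _)).symm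

variable [IsNoetherianRing A]

lemma length_le_depthE {rs : List A} (hrs : IsRegular N rs)
    (mem_maximalIdeal : ∀ r ∈ rs, r ∈ maximalIdeal A) : (rs.length : ℕ∞) ≤ depthE A N := by
  have := hrs.nontrivial
  refine le_sInf ?_
  rintro _ ⟨k, rfl, hk⟩
  rw [Nat.cast_le]
  by_contra! h_lt
  exact not_subsingleton_iff_nontrivial.2 hk <| (subsingleton_extH_iff _ _ _).2 <|
    ModuleCat.subsingleton_ext_of_exists_isRegular (maximalIdeal A)
      (ModuleCat.of A (A ⧸ maximalIdeal A)) (support_quotient_eq_zeroLocus _).le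
      (ModuleCat.of A N) maximalIdeal_smul_top_lt_top rs mem_maximalIdeal hrs k h_lt

lemma length_le_supportDim {rs : List A} (hrs : IsRegular N rs) :
    (rs.length : WithBot ℕ∞) ≤ Module.supportDim A N := by
  have := hrs.nontrivial
  have nontrivial_quotient : Nontrivial (N ⧸ Ideal.ofList rs • (⊤ : Submodule A N)) :=
    Submodule.Quotient.nontrivial_iff.2 hrs.top_ne_smul.symm
  rw [← Module.supportDim_add_length_eq_supportDim_of_isRegular rs hrs]
  exact le_add_of_nonneg_left (Order.krullDim_nonneg_iff.2
    Module.nonempty_support_of_nontrivial.to_subtype)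

lemma depthE_le_supportDim [Nontrivial N] :
    (depthE A N : WithBot ℕ∞) ≤ Module.supportDim A N := by
  by_contra! h_lt
  obtain ⟨n, supportDim_eq⟩ :=
    WithBot.ne_bot_iff_exists.1 (Module.supportDim_ne_bot_of_nontrivial A N)
  rw [← supportDim_eq, WithBot.coe_lt_coe] at h_lt
  obtain ⟨d, rfl⟩ := ENat.ne_top_iff_exists.1 h_lt.ne_top
  have subsingleton_ext (i : ℕ) (hi : i < d + 1) : Subsingleton (Abelian.Ext
      (ModuleCat.of A (A ⧸ maximalIdeal A)) (ModuleCat.of A N) i) := by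
    rw [← subsingleton_extH_iff]
    by_contra h_not
    have depth_le : depthE A N ≤ i := sInf_le ⟨i, rfl, not_subsingleton_iff_nontrivial.1 h_not⟩
    exact (h_lt.trans_le depth_le).not_ge (Nat.cast_le.2 (Nat.le_of_lt_succ hi))
  obtain ⟨rs, length_eq, -, hrs⟩ := ModuleCat.exists_isRegular_of_exists_subsingleton_ext
    (maximalIdeal A) (d + 1) (ModuleCat.of A N) maximalIdeal_smul_top_lt_top
    (ModuleCat.of A (A ⧸ maximalIdeal A)) (support_quotient_eq_zeroLocus _) subsingleton_ext
  have length_le := length_le_supportDim hrs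
  rw [length_eq, ← supportDim_eq] at length_le
  exact Nat.not_succ_le_self d (by exact_mod_cast length_le)

lemma isCMMod_of_supportDim_le_length {rs : List A} (hrs : IsRegular N rs)
    (mem_maximalIdeal : ∀ r ∈ rs, r ∈ maximalIdeal A)
    (h : Module.supportDim A N ≤ rs.length) : IsCMMod A N := by
  have := hrs.nontrivial
  rw [IsCMMod, dimE, ← Module.supportDim_eq_ringKrullDim_quotient_annihilator]
  exact depthE_le_supportDim.antisymm
    (h.trans (WithBot.coe_le_coe.2 (length_le_depthE hrs mem_maximalIdeal)))

end CohenMacaulay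

section Localization

variable {A : Type*} [CommRing A] {p : PrimeSpectrum A} {X : Type*} [AddCommGroup X] [Module A X]

lemma localizedModule_map_lsmul_apply (S : Submonoid A) (x : A) (t : LocalizedModule S X) :
    LocalizedModule.map S (LinearMap.lsmul A X x) t = algebraMap A (Localization S) x • t := by
  induction t using LocalizedModule.induction_on with
  | _ m s => rw [algebraMap_smul, LocalizedModule.smul'_mk, LocalizedModule.map_mk,
      LinearMap.lsmul_apply]

open scoped Pointwise in
lemma nonempty_quotSMulTop_localizedModule_equiv (S : Submonoid A) (x : A) (X : Type*)
    [AddCommGroup X] [Module A X] :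
    Nonempty (QuotSMulTop (algebraMap A (Localization S) x) (LocalizedModule S X)
      ≃ₗ[Localization S] LocalizedModule S (QuotSMulTop x X)) := by
  let g := LocalizedModule.map S (x • (⊤ : Submodule A X)).mkQ
  have exact_map : Function.Exact (LocalizedModule.map S (LinearMap.lsmul A X x)) g :=
    LocalizedModule.map_exact S _ _ (exact_lsmul_mkQ x X)
  have g_surjective : Function.Surjective g :=
    LocalizedModule.map_surjective S _ (Submodule.mkQ_surjective _)
  have smul_top_eq_ker : algebraMap A (Localization S) x • ⊤ = LinearMap.ker g := by
    rw [exact_map.linearMap_ker_eq]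
    ext t
    simp only [Submodule.mem_smul_pointwise_iff_exists, Submodule.mem_top, true_and,
      LinearMap.mem_range, localizedModule_map_lsmul_apply]
  exact ⟨(Submodule.quotEquivOfEq _ _ smul_top_eq_ker).trans
    (g.quotKerEquivOfSurjective g_surjective)⟩

lemma comap_mem_support_of_localizedModule {S : Submonoid A} {Q : PrimeSpectrum (Localization S)}
    (hQ : Q ∈ Module.support (Localization S) (LocalizedModule S X)) :
    PrimeSpectrum.comap (algebraMap A (Localization S)) Q ∈ Module.support A X := by
  rw [Module.mem_support_iff_exists_annihilator] at hQ ⊢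
  obtain ⟨t, ht⟩ := hQ
  induction t using LocalizedModule.induction_on with
  | _ m s =>
    refine ⟨m, fun a ha => ht ?_⟩
    rw [Submodule.mem_annihilator_span_singleton] at ha ⊢
    rw [algebraMap_smul, LocalizedModule.smul'_mk, ha, LocalizedModule.zero_mk]

variable [IsNoetherianRing A]

lemma supportDim_localizedModule_le {q : PrimeSpectrum A} {c : ℕ} (hpq : p ≤ q)
    (hc : ∀ Q ∈ Module.support A X, Q ≤ q → primeCodim q Q ≤ c) :
    Module.supportDim (Localization p.asIdeal.primeCompl)
      (LocalizedModule p.asIdeal.primeCompl X) ≤ (c - primeCodim q p : ℕ) := by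
  let e := IsLocalization.AtPrime.primeSpectrumOrderIso
    (Localization p.asIdeal.primeCompl) p.asIdeal
  let codim (Q : Module.support (Localization p.asIdeal.primeCompl)
      (LocalizedModule p.asIdeal.primeCompl X)) : ℕ := primeCodim q (e Q)
  have codim_le (Q) : codim Q ≤ c :=
    hc _ (comap_mem_support_of_localizedModule Q.2) ((e Q).2.trans hpq)
  have strictMono_sub_codim : StrictMono fun Q => c - codim Q := fun Q Q' hQQ' =>
    Nat.sub_lt_sub_left ((primeCodim_lt_primeCodim (e.strictMono hQQ')
      ((e Q').2.trans hpq)).trans_le (codim_le Q))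
      (primeCodim_lt_primeCodim (e.strictMono hQQ') ((e Q').2.trans hpq))
  refine iSup_le fun l => Nat.cast_le.2 ?_
  have length_le := (l.map _ strictMono_sub_codim).head_add_length_le_nat
  have le_codim_last : primeCodim q p ≤ codim l.last :=
    primeCodim_le_primeCodim (e l.last).2 hpq
  simp only [LTSeries.last_map, LTSeries.map_length] at length_le
  omega

variable [Module.Finite A X]

lemma isSMulRegular_localizedModule {x : A}
    (hx : ∀ P ∈ associatedPrimes A X, P ≤ p.asIdeal → x ∉ P) :
    IsSMulRegular (LocalizedModule p.asIdeal.primeCompl X)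
      (algebraMap A (Localization p.asIdeal.primeCompl) x) := by
  let S := p.asIdeal.primeCompl
  have : Subsingleton (LocalizedModule S (LinearMap.ker (LinearMap.lsmul A X x))) := by
    refine Module.notMem_support_iff.1 fun hp => ?_
    obtain ⟨P, hP, hPp, hxP⟩ := exists_mem_associatedPrimes_le_of_mem_support_ker hp
    exact hx P hP hPp hxP
  have exact_map : Function.Exact
      (LocalizedModule.map S (LinearMap.ker (LinearMap.lsmul A X x)).subtype)
      (LocalizedModule.map S (LinearMap.lsmul A X x)) :=
    LocalizedModule.map_exact S _ _ (LinearMap.exact_subtype_ker_map _)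
  rw [isSMulRegular_iff_right_eq_zero_of_smul]
  intro t ht
  obtain ⟨y, rfl⟩ := (exact_map t).1 ((localizedModule_map_lsmul_apply S x t).trans ht)
  rw [Subsingleton.elim y 0, map_zero]

end Localization

section Main

open IsLocalRing RingTheory.Sequence

variable [IsNoetherianRing R] {I : Ideal R} {p q : PrimeSpectrum R} {X : Type} [AddCommGroup X]
  [Module R X] [Module.Finite R X]

lemma exists_isRegular_localizedModule {c : ℕ} (hq : q.asIdeal ∈ I.minimalPrimes) (hpq : p < q)
    (hp : p ∈ Module.support R X) (hc : ∀ i < c, IsAnnihilatedByPow I (locHAt I q i X)) :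
    ∃ rs : List (Localization.AtPrime p.asIdeal),
      (∀ r ∈ rs, r ∈ maximalIdeal (Localization.AtPrime p.asIdeal)) ∧
      IsRegular (LocalizedModule p.asIdeal.primeCompl X) rs ∧ c ≤ rs.length + primeCodim q p := by
  induction c generalizing X with
  | zero =>
    have : Nontrivial (LocalizedModule p.asIdeal.primeCompl X) := hp
    exact ⟨[], by simp, .nil _ _, Nat.zero_le _⟩
  | succ c ih =>
    by_cases h_avoid : ∀ P ∈ associatedPrimes R X, P < q.asIdeal → ¬p.asIdeal ≤ P
    · obtain ⟨x, hxp, hx⟩ := exists_mem_forall_associatedPrimes_notMem h_avoid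
      obtain ⟨e⟩ := nonempty_quotSMulTop_localizedModule_equiv p.asIdeal.primeCompl x X
      obtain ⟨rs, mem_maximalIdeal, hrs, c_le⟩ := ih (X := QuotSMulTop x X)
        (by
          rw [Module.support_quotSMulTop]
          exact ⟨hp, Set.singleton_subset_iff.2 hxp⟩)
        fun i hi => isAnnihilatedByPow_locHAt_quotSMulTop hq hx (hc i (by omega))
          (hc (i + 1) (by omega))
      refine ⟨algebraMap R _ x :: rs, ?_, .cons (isSMulRegular_localizedModule
        fun P hP hPp => hx P hP (hPp.trans_lt hpq)) ((e.isRegular_congr rs).2 hrs), ?_⟩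
      · rw [List.forall_mem_cons, IsLocalization.AtPrime.to_map_mem_maximal_iff _ p.asIdeal]
        exact ⟨hxp, mem_maximalIdeal⟩
      · rw [List.length_cons]
        omega
    · push Not at h_avoid
      obtain ⟨P, hP, hPq, hpP⟩ := h_avoid
      obtain ⟨i, hi, h_not⟩ := exists_not_isAnnihilatedByPow_locHAt (P := ⟨P, hP.isPrime⟩) hq hP hPq
      have c_le : c + 1 ≤ i := le_of_not_gt fun h_lt => h_not (hc i h_lt)
      have codim_le := primeCodim_le_primeCodim (Q := ⟨P, hP.isPrime⟩) hpP hPq.le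
      have : Nontrivial (LocalizedModule p.asIdeal.primeCompl X) := hp
      exact ⟨[], by simp, .nil _ _, by rw [List.length_nil]; omega⟩

theorem isCMMod_localizedModule {c : ℕ} (hq : q.asIdeal ∈ I.minimalPrimes) (hpq : p < q)
    (hp : p ∈ Module.support R X) (h_le : ∀ i < c, IsAnnihilatedByPow I (locHAt I q i X))
    (h_gt : ∀ i, c < i → Subsingleton (locHAt I q i X)) :
    IsCMMod (Localization.AtPrime p.asIdeal) (LocalizedModule p.asIdeal.primeCompl X) := by
  obtain ⟨rs, mem_maximalIdeal, hrs, c_le⟩ := exists_isRegular_localizedModule hq hpq hp h_le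
  refine isCMMod_of_supportDim_le_length hrs mem_maximalIdeal ?_
  refine (supportDim_localizedModule_le hpq.le fun Q hQ hQq =>
    primeCodim_le_of_subsingleton_locHAt hq h_gt hQ hQq).trans (Nat.cast_le.2 ?_)
  omega

end Main

/-- **Proposition 3.6.** Let `M` be an `I`-relative generalized Cohen-Macaulay module with
`cd(I,M) > 0`. Then for every prime `p ∈ Supp M` properly contained in `I`, the localization
`M_p` is a Cohen-Macaulay `R_p`-module. -/
theorem proposition_3_6 [IsNoetherianRing R] (I : Ideal R)
    (M : Type) [AddCommGroup M] [Module R M] [Module.Finite R M]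
    (hgcm : IsRelGCM I M) (hpos : ∃ i : ℕ, 0 < i ∧ Nontrivial (locH I i M)) :
    ∀ p : PrimeSpectrum R, p.asIdeal < I →
      Nontrivial (LocalizedModule p.asIdeal.primeCompl M) →
      IsCMMod (Localization.AtPrime p.asIdeal) (LocalizedModule p.asIdeal.primeCompl M) := by
  intro p hpI hp
  obtain ⟨j, hj, h_nontrivial⟩ := hpos
  obtain ⟨c, hcd, hfd⟩ :=
    hgcm.resolve_left fun h => not_subsingleton_iff_nontrivial.2 h_nontrivial (h j hj)
  have hI : I ≠ ⊤ := by
    rintro rfl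
    exact not_subsingleton_iff_nontrivial.2 h_nontrivial (subsingleton_locH_top j)
  obtain ⟨q, hq⟩ := Ideal.nonempty_minimalPrimes hI
  refine isCMMod_localizedModule (q := ⟨q, hq.1.1⟩) (c := c) hq (hpI.trans_le hq.1.2) hp ?_ ?_
  · intro i hi
    have := hfd.1 i hi
    exact isAnnihilatedByPow_locHAt
  · intro i hi
    have := hcd.2 i hi
    infer_instance
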